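/- There exist constants C > 0 and N₀ such that for all integers N ≥ N₀ and all integers ℓ, |V_d(ℓ, N + |ℓ|(|ℓ|+1)/2) − p(N)·F(π|ℓ|/√(6N))| ≤ C·N^{−1/10}·p(N)·F(π|ℓ|/√(6N)), where F(α) = (1 + e^{−α})/(1 + e^{−α} + e^{−2α}). In other words, uniformly in ℓ ∈ ℤ as N → ∞, V_d(ℓ, N + |ℓ|(|ℓ|+1)/2) = p(N)·F(π|ℓ|/√(6N))·(1 + O(N^{−1/10})). -/

import Mathlib

open scoped BigOperators

/-- `IsSCC n l k` says that the list `l = (a_1, ..., a_s)` of nonnegative integers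
is a strongly concave composition of `n` with central part at (1-indexed) position `k`:
`a_1 > a_2 > ... > a_{k-1} > a_k < a_{k+1} < ... < a_s` and `a_1 + ... + a_s = n`. -/
def IsSCC (n : ℕ) (l : List ℕ) (k : ℕ) : Prop :=
  1 ≤ k ∧ k ≤ l.length ∧ l.sum = n ∧
  (∀ i j : Fin l.length, (i : ℕ) < j → (j : ℕ) < k → l.get j < l.get i) ∧
  (∀ i j : Fin l.length, k - 1 ≤ (i : ℕ) → (i : ℕ) < j → l.get i < l.get j)

/-- The rank `s - 2k + 1` of a strongly concave composition with `s` parts and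
central part at position `k`. -/
def sccRank (l : List ℕ) (k : ℕ) : ℤ := (l.length : ℤ) - 2 * k + 1

/-- `Vd m n` is the number of strongly concave compositions of `n` with rank `m`. -/
noncomputable def Vd (m : ℤ) (n : ℕ) : ℕ :=
  Set.ncard {p : List ℕ × ℕ | IsSCC n p.1 p.2 ∧ sccRank p.1 p.2 = m}

/-- `VdTotal n` is the total number of strongly concave compositions of `n`. -/
noncomputable def VdTotal (n : ℕ) : ℕ :=
  Set.ncard {p : List ℕ × ℕ | IsSCC n p.1 p.2}

/-- The partition function, extended by `0` to negative integers. -/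
def partitionCount (k : ℤ) : ℕ :=
  if 0 ≤ k then Fintype.card (Nat.Partition k.toNat) else 0

open Real

/-- The limit shape function `F(α) = (1 + e^{-α})/(1 + e^{-α} + e^{-2α})`. -/
noncomputable def Frk (α : ℝ) : ℝ :=
  (1 + Real.exp (-α)) / (1 + Real.exp (-α) + Real.exp (-2 * α))


open Real
open PowerSeries in
/-- `1/(q)_k`. -/
noncomputable def RR (k : ℕ) : PowerSeries ℝ := ∏ i ∈ Finset.range k, (1 - (X : PowerSeries ℝ) ^ (i+1))⁻¹

/-- partition numbers as reals -/
noncomputable def pp (n : ℕ) : ℝ := (Fintype.card (Nat.Partition n) : ℝ)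

open PowerSeries in
lemma one_sub_X_mul_inv (i : ℕ) : (1 - (X : PowerSeries ℝ) ^ (i+1)) * (1 - (X : PowerSeries ℝ) ^ (i+1))⁻¹ = 1 := by
  apply PowerSeries.mul_inv_cancel
  simp

open PowerSeries in
lemma RR_succ (k : ℕ) : RR (k+1) = X^(k+1) * RR (k+1) + RR k := by
  have h := one_sub_X_mul_inv k
  have : RR (k+1) = RR k * (1 - (X : PowerSeries ℝ) ^ (k+1))⁻¹ := by
    rw [RR, Finset.prod_range_succ, ← RR]
  have h2 : (1 - X^(k+1)) * RR (k+1) = RR k := by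
    rw [this]; linear_combination (RR k) * h
  linear_combination h2

lemma RR_zero : RR 0 = 1 := by simp [RR]

open PowerSeries PowerSeries.WithPiTopology in
lemma RR_eq (k : ℕ) : RR k = PowerSeries.mk fun n ↦
    ((Nat.Partition.restricted n (fun i => i ≤ k)).card : ℝ) := by
  have h := Nat.Partition.hasProd_powerSeriesMk_card_restricted ℝ (fun i => i ≤ k)
  have h2 : HasProd (fun i ↦ if i + 1 ≤ k then ∑' j : ℕ, (X : PowerSeries ℝ) ^ ((i + 1) * j) else 1)
     (∏ i ∈ Finset.range k, (if i + 1 ≤ k then ∑' j : ℕ, (X : PowerSeries ℝ) ^ ((i + 1) * j) else 1)) := by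
    apply hasProd_prod_of_ne_finset_one
    intro b hb
    simp at hb
    simp; omega
  rw [h.unique h2, RR]
  apply Finset.prod_congr rfl
  intro i hi
  simp at hi
  rw [if_pos (by omega)]
  have h3 := tsum_pow_mul_one_sub_of_constantCoeff_eq_zero (f := (X : PowerSeries ℝ)^(i+1)) (by simp)
  have h4 := one_sub_X_mul_inv i
  simp_rw [← pow_mul] at h3
  linear_combination ((∑' j : ℕ, (X : PowerSeries ℝ) ^ ((i + 1) * j)) * h4) - (1 - (X : PowerSeries ℝ) ^ (i+1))⁻¹ * h3

lemma RR_nonneg (k n : ℕ) : 0 ≤ PowerSeries.coeff n (RR k) := by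
  rw [RR_eq]; simp

lemma RR_pp {k n : ℕ} (h : n ≤ k) : PowerSeries.coeff n (RR k) = pp n := by
  rw [RR_eq]; simp only [PowerSeries.coeff_mk, pp, Nat.Partition.restricted]
  rw [Finset.filter_true_of_mem]
  · simp
  · intro x _ i hi
    exact (Nat.Partition.le_of_mem_parts hi).trans h

/-- coefficient of X^j * f -/
lemma coeff_Xpow_mul' (f : PowerSeries ℝ) (j n : ℕ) :
    PowerSeries.coeff n (PowerSeries.X ^ j * f) = if j ≤ n then PowerSeries.coeff (n - j) f else 0 := by
  rw [PowerSeries.coeff_X_pow_mul']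

lemma RR_mono {k : ℕ} (hk : 1 ≤ k) (n : ℕ) : PowerSeries.coeff n (RR k) ≤ PowerSeries.coeff (n+1) (RR k) := by
  induction k, hk using Nat.le_induction generalizing n with
  | base =>
    have h := congrArg (PowerSeries.coeff (n+1)) (RR_succ 0)
    simp only [map_add, coeff_Xpow_mul', RR_zero, zero_add] at h
    simp at h
    simp [h]
  | succ k hk ih =>
    induction n using Nat.strong_induction_on with
    | _ n ih2 =>
      rw [RR_succ k]
      simp only [map_add, coeff_Xpow_mul']
      apply add_le_add _ (ih n)
      by_cases h : k + 1 ≤ n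
      · rw [if_pos h, if_pos (by omega)]
        have := ih2 (n - (k+1)) (by omega)
        rwa [show n - (k+1) + 1 = n + 1 - (k+1) by omega] at this
      · rw [if_neg h]; split_ifs
        · exact RR_nonneg _ _
        · exact le_rfl

open PowerSeries in
/-- gaussian binomials -/
noncomputable def gb : ℕ → ℕ → PowerSeries ℝ
  | _, 0 => 1
  | 0, (_+1) => 0
  | (M+1), (a+1) => X^(a+1) * gb M (a+1) + gb M a

lemma gb_zero (M : ℕ) : gb M 0 = 1 := by cases M <;> simp [gb]
lemma gb_zero_succ (a : ℕ) : gb 0 (a+1) = 0 := by simp [gb]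
open PowerSeries in
lemma gb_succ (M a : ℕ) : gb (M+1) (a+1) = X^(a+1) * gb M (a+1) + gb M a := by rw [gb]

lemma gb_gt (M a : ℕ) (h : M < a) : gb M a = 0 := by
  induction M generalizing a with
  | zero => cases a with
    | zero => omega
    | succ a => simp [gb]
  | succ M ih => cases a with
    | zero => omega
    | succ a => rw [gb_succ, ih _ (by omega), ih _ (by omega)]; simp

lemma gb_coeff (M a n : ℕ) (h : n + a ≤ M) : PowerSeries.coeff n (gb M a) = PowerSeries.coeff n (RR a) := by
  induction M generalizing a n with
  | zero => obtain rfl : a = 0 := by omega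
            rw [gb_zero, RR_zero]
  | succ M ih => cases a with
    | zero => rw [gb_zero, RR_zero]
    | succ a =>
      rw [gb_succ, RR_succ]
      simp only [map_add, coeff_Xpow_mul']
      rw [ih a n (by omega)]
      split_ifs with h1
      · rw [ih _ _ (by omega)]
      · rfl

open PowerSeries in
lemma durfee_fin (M l : ℕ) :
    ∑ a ∈ Finset.range (M+1), X^(a*(a+l)) * gb M a * RR (a+l) = RR (M+l) := by
  induction M generalizing l with
  | zero => simp [gb_zero]
  | succ M ih =>
    have h1 := ih (l+1)
    rw [show M + 1 + l = M + (l+1) by ring, ← h1, Finset.sum_range_succ']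
    have h2 : ∑ a ∈ Finset.range (M+1), X^(a*(a+(l+1))) * gb M a * RR (a+(l+1)) =
       ∑ a ∈ Finset.range (M+1), X^((a+1)*(a+1+l)) * gb M a * RR (a+1+l) +
       ∑ a ∈ Finset.range (M+1), X^(a*(a+l+1)) * gb M a * RR (a+l) := by
      rw [← Finset.sum_add_distrib]
      apply Finset.sum_congr rfl
      intro a _
      rw [show a + 1 + l = a + l + 1 by ring, show a + (l+1) = a+l+1 by ring]
      have := RR_succ (a+l)
      have e : (X : PowerSeries ℝ)^((a+1)*(a+l+1)) = X^(a*(a+l+1)) * X^(a+l+1) := by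
        rw [← pow_add]; congr 1; ring
      rw [e]
      linear_combination (X^(a*(a+l+1)) * gb M a) * this
    rw [h2]
    have h3 : ∑ a ∈ Finset.range (M+1), X^((a+1)*(a+1+l)) * gb (M+1) (a+1) * RR (a+1+l) =
       ∑ a ∈ Finset.range (M+1), X^((a+1)*(a+1+l)) * gb M a * RR (a+1+l) +
       ∑ a ∈ Finset.range (M+1), X^((a+1)*((a+1)+l+1)) * gb M (a+1) * RR ((a+1)+l) := by
      rw [← Finset.sum_add_distrib]
      apply Finset.sum_congr rfl
      intro a _
      rw [gb_succ]
      have e : (X : PowerSeries ℝ)^((a+1)*(a+1+l+1)) = X^((a+1)*(a+1+l)) * X^(a+1) := by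
        rw [← pow_add]; congr 1
      rw [e]; ring
    rw [h3, add_assoc]
    congr 1
    rw [Finset.sum_range_succ, gb_gt M (M+1) (by omega), 
      Finset.sum_range_succ' (fun a => X^(a*(a+l+1)) * gb M a * RR (a+l))]
    simp [gb_zero]

/-- number of partitions of `n` with Durfee rectangle `a × (a+l)` -/
noncomputable def bb (l a n : ℕ) : ℝ := 
  PowerSeries.coeff n (PowerSeries.X^(a*(a+l)) * (RR a * RR (a+l)))

lemma mul_nonneg_coeff {f g : PowerSeries ℝ} (hf : ∀ n, 0 ≤ PowerSeries.coeff n f)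
    (hg : ∀ n, 0 ≤ PowerSeries.coeff n g) (n : ℕ) : 0 ≤ PowerSeries.coeff n (f * g) := by
  rw [PowerSeries.coeff_mul]
  exact Finset.sum_nonneg fun x _ => mul_nonneg (hf _) (hg _)

lemma mul_mono_coeff {f g : PowerSeries ℝ} (hf : ∀ n, 0 ≤ PowerSeries.coeff n f)
    (hg0 : ∀ n, 0 ≤ PowerSeries.coeff n g)
    (hg : ∀ n, PowerSeries.coeff n g ≤ PowerSeries.coeff (n+1) g) (n : ℕ) : 
    PowerSeries.coeff n (f * g) ≤ PowerSeries.coeff (n+1) (f*g) := by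
  rw [PowerSeries.coeff_mul, PowerSeries.coeff_mul, Finset.Nat.sum_antidiagonal_succ']
  apply le_add_of_nonneg_of_le (mul_nonneg (hf _) (hg0 _))
  apply Finset.sum_le_sum
  intro x _
  exact mul_le_mul_of_nonneg_left (hg _) (hf _)

lemma Xpow_nonneg (j n : ℕ) : 0 ≤ PowerSeries.coeff n ((PowerSeries.X : PowerSeries ℝ)^j) := by
  rw [PowerSeries.coeff_X_pow]; split_ifs <;> norm_num

lemma bb_nonneg (l a n : ℕ) : 0 ≤ bb l a n :=
  mul_nonneg_coeff (Xpow_nonneg _) (mul_nonneg_coeff (RR_nonneg _) (RR_nonneg _)) n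

lemma bb_mono {l a : ℕ} (h : 1 ≤ a + l) : Monotone (bb l a) := by
  apply monotone_nat_of_le_succ
  intro n
  unfold bb
  rw [← mul_assoc]
  exact mul_mono_coeff (mul_nonneg_coeff (Xpow_nonneg _) (RR_nonneg _)) (RR_nonneg _) (RR_mono h) n

lemma bb_zero {l a n : ℕ} (h : n < a) : bb l a n = 0 := by
  unfold bb
  rw [coeff_Xpow_mul', if_neg]
  have : a * 1 ≤ a * (a+l) := Nat.mul_le_mul_left _ (by omega)
  omega

lemma bb_sum (l n K : ℕ) (hK : n ≤ K) : ∑ a ∈ Finset.range (K+1), bb l a n = pp n := by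
  have h1 : ∑ a ∈ Finset.range (2*K+1), bb l a n = ∑ a ∈ Finset.range (K+1), bb l a n := by
    symm
    apply Finset.sum_subset
    · intro x; simp; omega
    · intro x _ hx; simp at hx; exact bb_zero (by omega)
  rw [← h1, ← RR_pp (k := 2*K+l) (by omega), ← durfee_fin, map_sum]
  apply Finset.sum_congr rfl
  intro a _
  by_cases h : n < a
  · rw [bb_zero h, mul_assoc, coeff_Xpow_mul', if_neg]
    have : a * 1 ≤ a * (a+l) := Nat.mul_le_mul_left _ (by omega)
    omega
  · unfold bb
    rw [mul_assoc, coeff_Xpow_mul', coeff_Xpow_mul']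
    split_ifs
    · rw [PowerSeries.coeff_mul, PowerSeries.coeff_mul]
      apply Finset.sum_congr rfl
      intro x hx
      simp at hx
      rw [gb_coeff _ _ _ (by omega)]
    · rfl

lemma bb_le (l a n : ℕ) : bb l a n ≤ pp n := by
  by_cases h : n < a
  · rw [bb_zero h]; unfold pp; positivity
  rw [← bb_sum l n n le_rfl]
  exact Finset.single_le_sum (f := fun a => bb l a n) (fun i _ => bb_nonneg l i n) (by simp; omega)

open Real
/-- triples (center, left parts, right parts) -/
def WS (m : ℤ) (n : ℕ) : Set (ℕ × Finset ℕ × Finset ℕ) :=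
  {x | (∀ y ∈ x.2.1, x.1 < y) ∧ (∀ y ∈ x.2.2, x.1 < y) ∧
    x.1 + x.2.1.sum id + x.2.2.sum id = n ∧ (x.2.2.card : ℤ) - x.2.1.card = m}

lemma IsSCC_iff (n c : ℕ) (L1 L2 : List ℕ) :
    IsSCC n (L1 ++ c :: L2) (L1.length + 1) ↔ L1.sum + c + L2.sum = n ∧ 
     (L1 ++ [c]).Pairwise (fun a b => b < a) ∧ (c :: L2).Pairwise (· < ·) := by
  have e1 : ∀ i (hi : i < L1.length + 1), ∀ hh, (L1 ++ c :: L2)[i]'hh = (L1 ++ [c])[i]'(by simp; omega) := by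
    intro i hi hh
    have : L1 ++ c :: L2 = (L1 ++ [c]) ++ L2 := by simp
    simp only [this]
    rw [List.getElem_append_left]
  have e2 : ∀ i (hi : i < (c :: L2).length), ∀ hh, (L1 ++ c :: L2)[L1.length + i]'hh = (c :: L2)[i]'hi := by
    intro i hi hh
    rw [List.getElem_append_right (by omega)]
    simp
  unfold IsSCC
  constructor
  · rintro ⟨-, -, h1, h2, h3⟩
    refine ⟨by simpa [add_assoc] using h1, ?_, ?_⟩
    · rw [List.pairwise_iff_getElem]
      intro i j hi hj hij
      simp at hi hj
      have := h2 ⟨i, by simp; omega⟩ ⟨j, by simp; omega⟩ hij (by simpa using hj)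
      simp only [List.get_eq_getElem] at this
      rwa [e1 i (by omega), e1 j (by omega)] at this
    · rw [List.pairwise_iff_getElem]
      intro i j hi hj hij
      simp at hi hj
      have := h3 ⟨L1.length + i, by simp; omega⟩ ⟨L1.length + j, by simp; omega⟩ (by simp) (by simpa using hij)
      simp only [List.get_eq_getElem] at this
      rwa [e2 i (by simpa using hi), e2 j (by simpa using hj)] at this
  · rintro ⟨h1, h2, h3⟩
    refine ⟨by omega, by simp, by simpa [add_assoc] using h1, ?_, ?_⟩
    · rintro ⟨i, hi⟩ ⟨j, hj⟩ hij hjk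
      simp only [List.get_eq_getElem] at *
      rw [e1 i (by omega), e1 j (by omega)]
      rw [List.pairwise_iff_getElem] at h2
      exact h2 i j _ _ hij
    · rintro ⟨i, hi⟩ ⟨j, hj⟩ hik hij
      simp only [List.get_eq_getElem] at *
      simp at hi hj hik
      obtain ⟨i, rfl⟩ := Nat.exists_eq_add_of_le hik
      obtain ⟨j, rfl⟩ := Nat.exists_eq_add_of_le (by omega : L1.length ≤ j)
      rw [e2 i (by simp; omega), e2 j (by simp; omega)]
      rw [List.pairwise_iff_getElem] at h3
      exact h3 i j _ _ (by omega)

lemma sum_sort (A : Finset ℕ) (r : ℕ → ℕ → Prop) [DecidableRel r] [IsTrans ℕ r] [Std.Antisymm r] [Std.Total r] :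
    (A.sort r).sum = A.sum id := by
  rw [← Multiset.sum_coe, Finset.sort_eq]; exact (Finset.sum_val A)

lemma Vd_eq_WS (m : ℤ) (n : ℕ) : Vd m n = (WS m n).ncard := by
  symm
  unfold Vd
  apply Set.ncard_congr (fun x _ => (x.2.1.sort (· ≥ ·) ++ x.1 :: x.2.2.sort (· ≤ ·), x.2.1.card + 1))
  · rintro ⟨c, A, B⟩ ⟨h1, h2, h3, h4⟩
    simp only at *
    constructor
    · have := IsSCC_iff n c (A.sort (· ≥ ·)) (B.sort (· ≤ ·))
      rw [Finset.length_sort] at this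
      rw [this]
      refine ⟨by rw [sum_sort, sum_sort]; omega, ?_, ?_⟩
      · rw [List.pairwise_append]
        refine ⟨(Finset.sortedGT_sort A).pairwise, by simp, ?_⟩
        intro a ha b hb
        simp at ha hb
        rw [hb]; exact h1 a ha
      · rw [List.pairwise_cons]
        refine ⟨?_, (Finset.sortedLT_sort B).pairwise⟩
        intro a ha
        simp at ha
        exact h2 a ha
    · unfold sccRank
      simp; omega
  · rintro ⟨c, A, B⟩ ⟨c', A', B'⟩ _ _ h
    simp only [Prod.mk.injEq] at h
    have h1 := List.append_inj h.1 (by simp; omega)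
    have h2 := h1.2
    rw [List.cons.injEq] at h2
    have h3 := congrArg List.toFinset h1.1
    have h4 := congrArg List.toFinset h2.2
    simp at h3 h4
    rw [h3, h4, h2.1]
  · rintro ⟨l, k⟩ ⟨h1, h2⟩
    simp only at h1 h2
    have hk : 1 ≤ k := h1.1
    have hk2 : k ≤ l.length := h1.2.1
    obtain ⟨j, rfl⟩ := Nat.exists_eq_add_of_le' hk
    have hl : l = l.take j ++ l[j] :: l.drop (j+1) := by
      simp
    obtain ⟨L1, c, L2, hL, hl⟩ : ∃ L1 c L2, L1.length = j ∧ l = L1 ++ c :: L2 :=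
      ⟨l.take j, l[j], l.drop (j+1), by simp; omega, hl⟩
    subst hl
    subst hL
    rw [IsSCC_iff] at h1
    obtain ⟨h1, h3, h4⟩ := h1
    rw [List.pairwise_append] at h3
    rw [List.pairwise_cons] at h4
    have n1 : L1.Nodup := h3.1.imp (fun h => by omega)
    have n2 : L2.Nodup := h4.2.imp (fun h => by omega)
    have s1 := (List.toFinset_sort (· ≥ ·) n1).2 (h3.1.imp (fun h => by omega))
    have s2 := (List.toFinset_sort (· ≤ ·) n2).2 (h4.2.imp (fun h => by omega))
    refine ⟨(c, L1.toFinset, L2.toFinset), ⟨?_, ?_, ?_, ?_⟩, ?_⟩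
    · intro y hy
      simp at hy
      exact h3.2.2 y hy c (by simp)
    · intro y hy
      simp at hy
      exact h4.1 y hy
    · simp only
      rw [← sum_sort _ (· ≥ ·), ← sum_sort L2.toFinset (· ≤ ·), s1, s2]
      omega
    · simp only
      unfold sccRank at h2
      rw [List.toFinset_card_of_nodup n1, List.toFinset_card_of_nodup n2]
      simp at h2
      omega
    · simp only
      rw [s1, s2, List.toFinset_card_of_nodup n1]

lemma WS_symm (m : ℤ) (n : ℕ) : (WS (-m) n).ncard = (WS m n).ncard := by
  apply Set.ncard_congr (fun x _ => (x.1, x.2.2, x.2.1))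
  · rintro ⟨c, A, B⟩ ⟨h1, h2, h3, h4⟩
    exact ⟨h2, h1, by simp only at *; omega, by simp only at *; omega⟩
  · rintro ⟨c, A, B⟩ ⟨c', A', B'⟩ _ _ h
    simp at h ⊢
    tauto
  · rintro ⟨c, A, B⟩ ⟨h1, h2, h3, h4⟩
    exact ⟨(c, B, A), ⟨h2, h1, by simp only at *; omega, by simp only at *; omega⟩, rfl⟩

/-- finsets with `a` elements, all `> c`, sum `s`. -/
def FS (a c s : ℕ) : Finset (Finset ℕ) :=
  ((Finset.range (s+1)).powersetCard a).filter (fun A => (∀ x ∈ A, c < x) ∧ A.sum id = s)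

lemma mem_FS {a c s : ℕ} {A : Finset ℕ} : A ∈ FS a c s ↔ A.card = a ∧ (∀ x ∈ A, c < x) ∧ A.sum id = s := by
  unfold FS
  rw [Finset.mem_filter, Finset.mem_powersetCard]
  constructor
  · rintro ⟨⟨_, h⟩, h2⟩; exact ⟨h, h2⟩
  · rintro ⟨h, h2, h3⟩
    refine ⟨⟨?_, h⟩, h2, h3⟩
    intro x hx
    have := Finset.single_le_sum (f := id) (fun i _ => Nat.zero_le _) hx
    simp at this ⊢
    simp at h3
    omega

lemma FS_card_le {a c s : ℕ} {A : Finset ℕ} (h : A ∈ FS a c s) : a ≤ s := by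
  rw [mem_FS] at h
  have : ∑ x ∈ A, 1 ≤ A.sum id := Finset.sum_le_sum (fun i hi => by have := h.2.1 i hi; simp; omega)
  simp at this
  have h3 := h.2.2
  simp at h3
  omega

lemma FS_shift (a c s : ℕ) : (FS a (c+1) (s + a)).card = (FS a c s).card := by
  symm
  apply Finset.card_bij (fun A _ => A.map (addRightEmbedding 1))
  · intro A hA
    rw [mem_FS] at *
    obtain ⟨h1, h2, h3⟩ := hA
    refine ⟨by simpa using h1, ?_, ?_⟩
    · intro x hx
      simp at hx
      obtain ⟨y, hy, rfl⟩ := hx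
      have := h2 y hy
      omega
    · rw [Finset.sum_map]
      simp [Finset.sum_add_distrib, h1] at h3 ⊢
      exact h3
  · intro A _ B _ h
    exact Finset.map_injective _ h
  · intro A hA
    rw [mem_FS] at hA
    obtain ⟨h1, h2, h3⟩ := hA
    have e : (A.image (fun x => x - 1)).map (addRightEmbedding 1) = A := by
      ext x
      simp
      constructor
      · rintro ⟨y, hy, rfl⟩
        have := h2 y hy
        rwa [Nat.sub_add_cancel (by omega)]
      · intro hx
        have := h2 x hx
        exact ⟨x, hx, by omega⟩
    refine ⟨A.image (fun x => x - 1), ?_, e⟩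
    rw [mem_FS]
    have e1 : (A.image (fun x => x - 1)).card = a := by
      rw [← h1]; conv_rhs => rw [← e]
      simp
    refine ⟨e1, ?_, ?_⟩
    · intro x hx
      simp at hx
      obtain ⟨y, hy, rfl⟩ := hx
      have := h2 y hy
      omega
    · rw [← e, Finset.sum_map] at h3
      simp only [id, addRightEmbedding_apply, Finset.sum_add_distrib, Finset.sum_const, e1] at h3
      simp at h3 ⊢
      exact h3

lemma FS_shift_lt {a c s : ℕ} (h : s < a) : (FS a c s).card = 0 := by
  rw [Finset.card_eq_zero, Finset.eq_empty_iff_forall_notMem]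
  intro A hA
  have := FS_card_le hA
  omega

lemma FS_split (a c s : ℕ) : (FS (a+1) c s).card = (FS (a+1) (c+1) s).card +
    if c + 1 ≤ s then (FS a (c+1) (s - (c+1))).card else 0 := by
  rw [← Finset.card_filter_add_card_filter_not (s := FS (a+1) c s) (fun A => c + 1 ∉ A)]
  congr 1
  · congr 1
    ext A
    simp only [Finset.mem_filter, mem_FS]
    constructor
    · rintro ⟨⟨h1, h2, h3⟩, h4⟩
      refine ⟨h1, ?_, h3⟩
      intro x hx
      have := h2 x hx
      have : x ≠ c + 1 := fun h => h4 (h ▸ hx)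
      omega
    · rintro ⟨h1, h2, h3⟩
      refine ⟨⟨h1, fun x hx => by have := h2 x hx; omega, h3⟩, fun h => by have := h2 _ h; omega⟩
  · split_ifs with hs
    · apply Finset.card_bij (fun A _ => A.erase (c+1))
      · intro A hA
        simp only [Finset.mem_filter, mem_FS, not_not] at *
        obtain ⟨⟨h1, h2, h3⟩, h4⟩ := hA
        refine ⟨by rw [Finset.card_erase_of_mem h4]; omega, ?_, ?_⟩
        · intro x hx
          simp at hx
          have := h2 x hx.2
          omega
        · have := Finset.add_sum_erase A id h4
          simp only [id] at *
          omega
      · intro A hA B hB h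
        simp only [Finset.mem_filter, not_not] at *
        rw [← Finset.insert_erase hA.2, ← Finset.insert_erase hB.2, h]
      · intro B hB
        rw [mem_FS] at hB
        obtain ⟨h1, h2, h3⟩ := hB
        have hn : c + 1 ∉ B := fun h => by have := h2 _ h; omega
        refine ⟨insert (c+1) B, ?_, by simp [hn]⟩
        simp only [Finset.mem_filter, mem_FS, not_not]
        refine ⟨⟨by simp [hn, h1], ?_, ?_⟩, by simp⟩
        · intro x hx
          simp at hx
          rcases hx with rfl | hx
          · omega
          · have := h2 x hx; omega
        · rw [Finset.sum_insert hn]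
          simp only [id] at *
          omega
    · rw [Finset.card_eq_zero, Finset.eq_empty_iff_forall_notMem]
      intro A hA
      simp only [Finset.mem_filter, mem_FS, not_not] at hA
      obtain ⟨⟨h1, h2, h3⟩, h4⟩ := hA
      have := Finset.single_le_sum (f := id) (fun i _ => Nat.zero_le _) h4
      simp only [id] at *
      omega

open PowerSeries in
lemma FS_gf (a c : ℕ) : (PowerSeries.mk fun s => ((FS a c s).card : ℝ)) = X^(c*a + a*(a+1)/2) * RR a := by
  induction a with
  | zero =>
    rw [RR_zero]
    ext s
    simp
    by_cases h : s = 0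
    · subst h
      have : FS 0 c 0 = {∅} := by
        ext A; rw [mem_FS]; simp
        rintro rfl; simp
      rw [this]; simp
    · rw [Finset.eq_empty_of_forall_notMem (s := FS 0 c s)]
      · simp [h]
      · intro A hA
        rw [mem_FS] at hA
        obtain ⟨h1, h2, h3⟩ := hA
        rw [Finset.card_eq_zero] at h1
        subst h1
        simp at h3
        omega
  | succ a ih =>
    set D := (PowerSeries.mk fun s => ((FS (a+1) c s).card : ℝ)) with hD
    set E := (PowerSeries.mk fun s => ((FS a c s).card : ℝ)) with hE
    have h1 : D = X^(a+1) * D + X^(c+1+a) * E := by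
      ext s
      rw [map_add, coeff_Xpow_mul', coeff_Xpow_mul', hD, hE]
      simp only [PowerSeries.coeff_mk]
      rw [FS_split]
      push_cast
      congr 1
      · split_ifs with h
        · obtain ⟨s, rfl⟩ := Nat.exists_eq_add_of_le' h
          rw [FS_shift]; simp
        · rw [FS_shift_lt (by omega)]; simp
      · by_cases h : c + 1 + a ≤ s
        · rw [if_pos h, if_pos (by omega)]
          obtain ⟨s, rfl⟩ := Nat.exists_eq_add_of_le' h
          rw [show s + (c+1+a) - (c+1) = s + a by omega, FS_shift]; simp
        · rw [if_neg h]
          split_ifs with h'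
          · rw [FS_shift_lt (by omega)]; simp
          · simp
    have h2 := RR_succ a
    have h3 := one_sub_X_mul_inv a
    have e : c*(a+1) + (a+1)*(a+1+1)/2 = (c+1+a) + (c*a + a*(a+1)/2) := by
      have : (a+1)*(a+1+1) = a*(a+1) + (a+1)*2 := by ring
      rw [this, Nat.add_mul_div_right _ _ (by norm_num)]; ring
    rw [e, pow_add, mul_assoc]
    have h4 : (1 - X^(a+1)) * D = (1 - X^(a+1)) * (X^(c+1+a) * (X^(c*a + a*(a+1)/2) * RR (a+1))) := by
      rw [ih] at h1
      linear_combination h1 - (X^(c+1+a) * X^(c*a + a*(a+1)/2)) * h2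
    calc D = (1 - (X : PowerSeries ℝ) ^ (a+1))⁻¹ * ((1 - X^(a+1)) * D) := by linear_combination -D * h3
      _ = _ := by rw [h4]; linear_combination (X^(c+1+a) * (X^(c*a + a*(a+1)/2) * RR (a+1))) * h3

/-- shifted evaluation -/
noncomputable def bt (l a N k : ℕ) : ℝ := if k ≤ N then bb l a (N - k) else 0

lemma WS_card (l n : ℕ) : ((WS l n).ncard) = 
   ∑ a ∈ Finset.range (n+1), ∑ c ∈ Finset.range (n+1), ∑ s ∈ Finset.HasAntidiagonal.antidiagonal (n - c), 
     (FS a c s.1).card * (FS (a+l) c s.2).card := by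
  let S : Finset (Σ _ : ℕ, Σ _ : ℕ, Σ _ : ℕ × ℕ, Finset ℕ × Finset ℕ) :=
    (Finset.range (n+1)).sigma fun a => (Finset.range (n+1)).sigma fun c => 
      (Finset.HasAntidiagonal.antidiagonal (n-c)).sigma fun s => FS a c s.1 ×ˢ FS (a+l) c s.2
  have hS : S.card = ∑ a ∈ Finset.range (n+1), ∑ c ∈ Finset.range (n+1), ∑ s ∈ Finset.HasAntidiagonal.antidiagonal (n - c), 
     (FS a c s.1).card * (FS (a+l) c s.2).card := by
    simp [S, Finset.card_sigma]
  rw [← hS, ← Set.ncard_coe_finset]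
  symm
  apply Set.ncard_congr (fun x _ => (x.2.1, x.2.2.2.1, x.2.2.2.2))
  · rintro ⟨a, c, ⟨s1, s2⟩, A, B⟩ hx
    simp [S, mem_FS] at hx
    obtain ⟨h1, h2, h3, ⟨h4, h5, h6⟩, h7, h8, h9⟩ := hx
    refine ⟨h5, h8, ?_, ?_⟩
    · simp; omega
    · simp; omega
  · rintro ⟨a, c, ⟨s1, s2⟩, A, B⟩ ⟨a', c', ⟨s1', s2'⟩, A', B'⟩ hx hx' h
    simp [S, mem_FS] at hx hx' h
    obtain ⟨h1, h2, h3, ⟨h4, h5, h6⟩, h7, h8, h9⟩ := hx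
    obtain ⟨h1', h2', h3', ⟨h4', h5', h6'⟩, h7', h8', h9'⟩ := hx'
    obtain ⟨rfl, rfl, rfl⟩ := h
    subst h4 h6 h9 
    subst h4' h6' h9'
    rfl
  · rintro ⟨c, A, B⟩ ⟨h1, h2, h3, h4⟩
    simp only at *
    have hA : A ∈ FS A.card c (A.sum id) := by rw [mem_FS]; exact ⟨rfl, h1, rfl⟩
    have hB : B ∈ FS (A.card + l) c (B.sum id) := by rw [mem_FS]; exact ⟨by omega, h2, rfl⟩
    have := FS_card_le hA
    refine ⟨⟨A.card, c, (A.sum id, B.sum id), A, B⟩, ?_, rfl⟩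
    simp only [S, Finset.coe_sigma, Set.mem_sigma_iff, Finset.mem_coe, Finset.mem_range, Finset.mem_product]
    refine ⟨by omega, by omega, by rw [Finset.HasAntidiagonal.mem_antidiagonal]; omega, hA, hB⟩

lemma Vd_eq (m : ℤ) (N : ℕ) : (Vd m (N + m.natAbs * (m.natAbs + 1)/2) : ℝ) =
    ∑ a ∈ Finset.range (N+1), ∑ c ∈ Finset.range (N+1), bt m.natAbs a N (a + c * (2*a + m.natAbs + 1)) := by
  rw [Vd_eq_WS]
  have : (WS m (N + m.natAbs * (m.natAbs + 1)/2)).ncard = 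
     (WS (m.natAbs : ℤ) (N + m.natAbs * (m.natAbs + 1)/2)).ncard := by
    generalize N + m.natAbs * (m.natAbs + 1)/2 = n
    rcases Int.natAbs_eq m with h | h
    · rw [← h]
    · have h2 : (m.natAbs : ℤ) = -m := by omega
      rw [h2, WS_symm]
  rw [this]
  generalize m.natAbs = l
  rw [WS_card]
  set n := N + l*(l+1)/2 with hn
  push_cast
  have key : ∀ a c, c ≤ n → ∑ s ∈ Finset.HasAntidiagonal.antidiagonal (n - c), ((FS a c s.1).card : ℝ) * (FS (a+l) c s.2).card =
     bt l a N (a + c * (2*a + l + 1)) := by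
    intro a c hc
    have h1 : ∑ s ∈ Finset.HasAntidiagonal.antidiagonal (n - c), ((FS a c s.1).card : ℝ) * (FS (a+l) c s.2).card =
       PowerSeries.coeff (n - c) ((PowerSeries.mk fun s => ((FS a c s).card : ℝ)) * (PowerSeries.mk fun s => ((FS (a+l) c s).card : ℝ))) := by
      rw [PowerSeries.coeff_mul]; simp
    rw [h1, FS_gf, FS_gf]
    have e : c*a + a*(a+1)/2 + (c*(a+l) + (a+l)*(a+l+1)/2) + c = a*(a+l) + (a + c * (2*a + l + 1)) + l*(l+1)/2 := by
      have e1 : (a+l)*(a+l+1) = l*(l+1) + a*(a+1) + (a*l) * 2 := by ring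
      rw [e1, Nat.add_mul_div_right _ _ (by norm_num)]
      have d1 : 2 ∣ a*(a+1) := (Nat.even_mul_succ_self a).two_dvd
      have d2 : 2 ∣ l*(l+1) := (Nat.even_mul_succ_self l).two_dvd
      obtain ⟨u, hu⟩ := d1
      obtain ⟨v, hv⟩ := d2
      rw [hu, hv, show 2*v + 2*u = 2*(v+u) by ring]
      simp only [Nat.mul_div_cancel_left _ (show 0 < 2 by norm_num)]
      have : 2*u = a*a + a := by rw [← hu]; ring
      nlinarith
    rw [show PowerSeries.X^(c*a + a*(a+1)/2) * RR a * (PowerSeries.X^(c*(a+l) + (a+l)*(a+l+1)/2) * RR (a+l)) =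
      PowerSeries.X^(c*a + a*(a+1)/2 + (c*(a+l) + (a+l)*(a+l+1)/2)) * (RR a * RR (a+l)) by rw [pow_add]; ring]
    rw [coeff_Xpow_mul']
    unfold bt bb
    rw [coeff_Xpow_mul']
    generalize c*a + a*(a+1)/2 + (c*(a+l) + (a+l)*(a+l+1)/2) = u at *
    generalize a * (a+l) = v at *
    generalize a + c * (2*a + l + 1) = k at *
    generalize l*(l+1)/2 = z at *
    by_cases h : u ≤ n - c
    · rw [if_pos h, if_pos (by omega), if_pos (by omega)]
      congr 2
      omega
    · rw [if_neg h]
      split_ifs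
      · omega
      · rfl
      · rfl
  have z1 : ∀ a c, N < c → bt l a N (a + c * (2*a + l + 1)) = 0 := by
    intro a c h
    unfold bt
    rw [if_neg]
    have : c * 1 ≤ c * (2*a+l+1) := Nat.mul_le_mul_left _ (by omega)
    omega
  have z2 : ∀ a c, N < a → bt l a N (a + c * (2*a + l + 1)) = 0 := by
    intro a c h
    unfold bt
    rw [if_neg]
    omega
  calc _ = ∑ a ∈ Finset.range (n+1), ∑ c ∈ Finset.range (n+1), bt l a N (a + c * (2*a + l + 1)) := by
        apply Finset.sum_congr rfl
        intro a _
        apply Finset.sum_congr rfl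
        intro c hc
        simp at hc
        exact key a c (by omega)
    _ = ∑ a ∈ Finset.range (n+1), ∑ c ∈ Finset.range (N+1), bt l a N (a + c * (2*a + l + 1)) := by
        apply Finset.sum_congr rfl
        intro a _
        symm
        apply Finset.sum_subset
        · intro x; simp; omega
        · intro x _ hx; simp at hx; exact z1 _ _ (by omega)
    _ = _ := by
        symm
        apply Finset.sum_subset
        · intro x; simp; omega
        · intro x _ hx; simp at hx; exact Finset.sum_eq_zero fun c _ => z2 _ _ (by omega)

open Real

lemma dvd_sub_self_iff' (m k : ℕ) (h : m + 1 ≤ k) : (m+1 ∣ k - (m+1)) ↔ m + 1 ∣ k := by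
  obtain ⟨k, rfl⟩ := Nat.exists_eq_add_of_le h
  rw [Nat.add_sub_cancel_left]
  simp

open PowerSeries in
lemma inv_coeff (m k : ℕ) : PowerSeries.coeff k ((1 - (X : PowerSeries ℝ)^(m+1))⁻¹) = if (m+1) ∣ k then 1 else 0 := by
  have h1 : (1 - (X : PowerSeries ℝ)^(m+1)) * PowerSeries.mk (fun k => if (m+1) ∣ k then (1:ℝ) else 0) = 1 := by
    ext k
    rw [sub_mul, one_mul, map_sub, coeff_Xpow_mul', PowerSeries.coeff_one]
    simp only [PowerSeries.coeff_mk]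
    by_cases h : m + 1 ≤ k
    · have : (m+1 ∣ k - (m+1)) ↔ m + 1 ∣ k := dvd_sub_self_iff' m k h
      have h0 : k ≠ 0 := by omega
      simp [this, h, h0]
    · rw [if_neg h]
      by_cases h2 : k = 0
      · simp [h2]
      · rw [if_neg h2, if_neg]; · simp
        intro h3
        have := Nat.le_of_dvd (by omega) h3
        omega
  have h2 := one_sub_X_mul_inv m
  have : (1 - (X : PowerSeries ℝ)^(m+1))⁻¹ = PowerSeries.mk (fun k => if (m+1) ∣ k then (1:ℝ) else 0) := by
    linear_combination (-(1 - (X : PowerSeries ℝ)^(m+1))⁻¹) * h1 + PowerSeries.mk (fun k => if (m+1) ∣ k then (1:ℝ) else 0) * h2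
  rw [this, PowerSeries.coeff_mk]

open PowerSeries in
lemma RR_deriv (K : ℕ) : X * PowerSeries.derivative (R := ℝ) (RR K) = 
    RR K * ∑ m ∈ Finset.range K, (((m+1 : ℕ) : PowerSeries ℝ)) * (X^(m+1) * (1 - (X : PowerSeries ℝ)^(m+1))⁻¹) := by
  induction K with
  | zero => simp [RR_zero]
  | succ K ih =>
    have e : RR (K+1) = RR K * (1 - (X : PowerSeries ℝ) ^ (K+1))⁻¹ := by
      rw [RR, Finset.prod_range_succ, ← RR]
    rw [Finset.sum_range_succ, e, Derivation.leibniz, PowerSeries.derivative_inv', map_sub, derivative_one, 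
      PowerSeries.derivative_pow, derivative_X]
    simp only [smul_eq_mul, Nat.add_sub_cancel]
    generalize (1 - (X : PowerSeries ℝ) ^ (K+1))⁻¹ = I at *
    linear_combination I * ih

/-- sum of divisors -/
noncomputable def sg (k : ℕ) : ℝ := ((ArithmeticFunction.sigma 1 k : ℕ) : ℝ)

lemma sg_eq (n k : ℕ) (h : k ≤ n) : 
   PowerSeries.coeff k (∑ m ∈ Finset.range n, (((m+1 : ℕ) : PowerSeries ℝ)) * (PowerSeries.X^(m+1) * (1 - (PowerSeries.X : PowerSeries ℝ)^(m+1))⁻¹)) = sg k := by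
  rw [map_sum]
  unfold sg
  rw [ArithmeticFunction.sigma_one_apply, ]
  have h1 : ∀ m, PowerSeries.coeff k ((((m+1 : ℕ) : PowerSeries ℝ)) * (PowerSeries.X^(m+1) * (1 - (PowerSeries.X : PowerSeries ℝ)^(m+1))⁻¹))
     = if (m+1) ∈ k.divisors then ((m+1 : ℕ) : ℝ) else 0 := by
    intro m
    rw [show ((m+1 : ℕ) : PowerSeries ℝ) = PowerSeries.C ((m+1 : ℕ) : ℝ) by simp, PowerSeries.coeff_C_mul, coeff_Xpow_mul', inv_coeff]
    by_cases h2 : m + 1 ≤ k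
    · rw [if_pos h2]; simp only [Nat.mem_divisors]
      have : (m+1 ∣ k - (m+1)) ↔ m + 1 ∣ k := dvd_sub_self_iff' m k h2
      have h3 : k ≠ 0 := by omega
      simp [this, h3]
    · rw [if_neg h2, if_neg]
      · simp
      · intro h3
        exact h2 (Nat.divisor_le h3)
  simp_rw [h1]
  rw [Finset.sum_ite, Finset.sum_const_zero, add_zero]
  push_cast
  symm
  apply Finset.sum_bij_ne_zero (fun d _ _ => d - 1)
  · intro d hd _
    have := Nat.divisor_le hd
    have := Nat.pos_of_mem_divisors hd
    simp
    rw [Nat.sub_add_cancel (by omega)]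
    simp at hd
    exact ⟨by omega, hd⟩
  · intro d hd _ d' hd' _ h
    have := Nat.pos_of_mem_divisors hd
    have := Nat.pos_of_mem_divisors hd'
    omega
  · intro m hm _
    rw [Finset.mem_filter] at hm
    exact ⟨m+1, hm.2, by positivity, by simp⟩
  · intro d hd _
    have := Nat.pos_of_mem_divisors hd
    rw [Nat.cast_sub (by omega)]; simp

lemma pp_rec (n : ℕ) : (n : ℝ) * pp n = 
    PowerSeries.coeff n ((PowerSeries.mk pp) * PowerSeries.mk sg) := by
  have h := congrArg (PowerSeries.coeff n) (RR_deriv n)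
  have h2 : PowerSeries.coeff n (PowerSeries.X * PowerSeries.derivative (R := ℝ) (RR n)) = (n : ℝ) * pp n := by
    cases n with
    | zero => simp
    | succ n => rw [PowerSeries.coeff_succ_X_mul, PowerSeries.coeff_derivative, RR_pp le_rfl]; push_cast; ring
  rw [← h2, h, PowerSeries.coeff_mul, PowerSeries.coeff_mul]
  apply Finset.sum_congr rfl
  intro x hx
  rw [Finset.HasAntidiagonal.mem_antidiagonal] at hx
  rw [RR_pp (by omega), sg_eq n _ (by omega)]
  simp

lemma pp_mono (n : ℕ) : pp n ≤ pp (n+1) := by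
  rw [← RR_pp (k := n+1) (by omega), ← RR_pp (k := n+1) le_rfl]
  exact RR_mono (by omega) n

lemma pp_zero : pp 0 = 1 := by rw [← RR_pp (k := 0) le_rfl, RR_zero]; simp

lemma pp_monotone : Monotone pp := monotone_nat_of_le_succ pp_mono
lemma pp_one_le (n : ℕ) : 1 ≤ pp n := by rw [← pp_zero]; exact pp_monotone (Nat.zero_le _)

/-- cumulative sums -/
noncomputable def Dn (n : ℕ) : ℝ := ∑ j ∈ Finset.range n, pp j
/-- double cumulative sums -/
noncomputable def Qn (n : ℕ) : ℝ := ∑ j ∈ Finset.range (n+1), Dn j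

lemma mk_one_sub (f : ℕ → ℝ) : (1 - PowerSeries.X) * PowerSeries.mk f = 
   PowerSeries.mk (fun n => f n - if n = 0 then 0 else f (n-1)) := by
  ext n
  rw [sub_mul, one_mul, map_sub]
  cases n with
  | zero => simp
  | succ n => rw [PowerSeries.coeff_succ_X_mul]; simp

/-- partial sums of sigma -/
noncomputable def Sg (n : ℕ) : ℝ := ∑ k ∈ Finset.Ioc 0 n, sg k

lemma sg_zero : sg 0 = 0 := by simp [sg]

lemma Sg_ps : (1 - PowerSeries.X) * PowerSeries.mk Sg = PowerSeries.mk sg := by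
  rw [mk_one_sub]
  ext n
  cases n with
  | zero => simp [Sg, sg_zero]
  | succ n => simp [Sg]; rw [Finset.sum_Ioc_succ_top (by omega)]; simp

lemma Dn_ps : (1 - PowerSeries.X) * PowerSeries.mk Dn = PowerSeries.X * PowerSeries.mk pp := by
  rw [mk_one_sub]
  ext n
  cases n with
  | zero => simp [Dn]
  | succ n => simp [Dn, Finset.sum_range_succ]

lemma Qn_ps : (1 - PowerSeries.X) * PowerSeries.mk Qn = PowerSeries.mk Dn := by
  rw [mk_one_sub]
  ext n
  cases n with
  | zero => simp [Dn, Qn]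
  | succ n => simp [Qn]; rw [Finset.sum_range_succ]; simp

lemma nat_ps : (1 - PowerSeries.X)^2 * PowerSeries.mk (fun n => (n : ℝ)) = PowerSeries.X := by
  rw [pow_two, mul_assoc, mk_one_sub, mk_one_sub]
  ext n
  rcases n with _ | _ | n
  · simp
  · simp
  · simp [PowerSeries.coeff_X]

lemma tri_ps : (1 - PowerSeries.X) * PowerSeries.mk (fun n => (n : ℝ) * (n+1)/2) = PowerSeries.mk (fun n => (n : ℝ)) := by
  rw [mk_one_sub]
  ext n
  cases n with
  | zero => simp
  | succ n => simp; ring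

/-- difference of pp -/
noncomputable def dp (n : ℕ) : ℝ := pp n - if n = 0 then 0 else pp (n-1)

lemma dp_nonneg (n : ℕ) : 0 ≤ dp n := by
  unfold dp
  cases n with
  | zero => simp [pp_zero]
  | succ n => simpa using pp_mono n

lemma dp_ps : (1 - PowerSeries.X) * PowerSeries.mk pp = PowerSeries.mk dp := mk_one_sub pp

lemma osx_ne : (1 - PowerSeries.X : PowerSeries ℝ) ≠ 0 := by
  intro h
  have := congrArg (PowerSeries.coeff 0) h
  simp at this

lemma rep_n (n : ℕ) : (n : ℝ) * pp n = PowerSeries.coeff n (PowerSeries.mk dp * PowerSeries.mk Sg) := by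
  rw [pp_rec, ← dp_ps, ← Sg_ps]; congr 1; ring

lemma rep_D (n : ℕ) : Dn n = PowerSeries.coeff n (PowerSeries.mk dp * PowerSeries.mk (fun n => (n : ℝ))) := by
  have : PowerSeries.mk Dn = PowerSeries.mk dp * PowerSeries.mk (fun n => (n : ℝ)) := by
    apply mul_left_cancel₀ osx_ne
    rw [Dn_ps, ← dp_ps]
    linear_combination (-PowerSeries.mk pp) * nat_ps
  rw [← this]; simp

lemma rep_Q (n : ℕ) : Qn n = PowerSeries.coeff n (PowerSeries.mk dp * PowerSeries.mk (fun n => (n : ℝ) * (n+1)/2)) := by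
  have : PowerSeries.mk Qn = PowerSeries.mk dp * PowerSeries.mk (fun n => (n : ℝ) * (n+1)/2) := by
    apply mul_left_cancel₀ osx_ne
    apply mul_left_cancel₀ osx_ne
    rw [Qn_ps, Dn_ps, ← dp_ps]
    linear_combination (-PowerSeries.mk pp) * nat_ps - ((1 - PowerSeries.X)^2 * PowerSeries.mk pp) * tri_ps
  rw [← this]; simp

lemma Sg_eq (x : ℕ) : Sg x = ∑ j ∈ Finset.Ioc 0 x, (((x / j : ℕ) : ℝ) * ((x/j : ℕ) + 1) / 2) := by
  unfold Sg sg
  have := ArithmeticFunction.sum_Ioc_mul_eq_sum_sum ArithmeticFunction.zeta (ArithmeticFunction.pow 1) x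
  rw [ArithmeticFunction.zeta_mul_pow_eq_sigma] at this
  rw [← Nat.cast_sum, this, Nat.cast_sum]
  apply Finset.sum_congr rfl
  intro j hj
  simp at hj
  rw [ArithmeticFunction.zeta_apply_ne (by omega), one_mul]
  generalize x / j = m
  induction m with
  | zero => simp
  | succ m ih => rw [Finset.sum_Ioc_succ_top (by omega), Nat.cast_add, ih]; simp; ring

/-- ζ(2) -/
noncomputable def kap : ℝ := π^2/6

lemma kap_gt : 1.6 < kap := by unfold kap; nlinarith [Real.pi_gt_d2]
lemma kap_lt : kap < 1.7 := by unfold kap; nlinarith [Real.pi_lt_d2, Real.pi_gt_d2]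

lemma basel (x : ℕ) (hx : 1 ≤ x) : (∑ j ∈ Finset.Ioc 0 x, 1/(j:ℝ)^2) ≤ kap ∧ 
    kap ≤ (∑ j ∈ Finset.Ioc 0 x, 1/(j:ℝ)^2) + 1/x := by
  constructor
  · exact sum_le_hasSum _ (fun i _ => by positivity) hasSum_zeta_two
  · have h := hasSum_zeta_two.tendsto_sum_nat
    apply le_of_tendsto h
    filter_upwards [Filter.eventually_ge_atTop (x+1)] with M hM
    obtain ⟨M, rfl⟩ := Nat.exists_eq_add_of_le' (by omega : 1 ≤ M)
    have h1 : ∑ i ∈ Finset.range (M+1), 1/(i:ℝ)^2 = ∑ i ∈ Finset.Ioc 0 M, 1/(i:ℝ)^2 := by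
      clear hM
      induction M with
      | zero => simp
      | succ M ih => rw [Finset.sum_range_succ, ih, Finset.sum_Ioc_succ_top (by omega)]
    rw [h1, ← Finset.sum_Ioc_consecutive _ (Nat.zero_le x) (by omega : x ≤ M)]
    have := sum_Ioc_inv_sq_le_sub (α := ℝ) (k := x) (n := M) (by omega) (by omega)
    simp only [one_div]
    have h3 : (0:ℝ) ≤ (M:ℝ)⁻¹ := by positivity
    linarith

lemma Sg_bound (x : ℕ) (hx : 1 ≤ x) : |Sg x - kap * ((x:ℝ)*(x+1)/2)| ≤ x * (3 + Real.log x) := by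
  have hx' : (1:ℝ) ≤ x := by exact_mod_cast hx
  have h1 : |Sg x - ∑ j ∈ Finset.Ioc 0 x, (x:ℝ)^2/2 * (1/(j:ℝ)^2)| ≤ ∑ j ∈ Finset.Ioc 0 x, (x:ℝ)/2 * (j:ℝ)⁻¹ := by
    rw [Sg_eq, ← Finset.sum_sub_distrib]
    apply (Finset.abs_sum_le_sum_abs _ _).trans
    apply Finset.sum_le_sum
    intro j hj
    simp at hj
    have hj' : (1:ℝ) ≤ j := by exact_mod_cast hj.1
    have a1 : ((x / j : ℕ) : ℝ) ≤ (x:ℝ)/j := Nat.cast_div_le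
    have a2 : (x:ℝ)/j < ((x / j : ℕ) : ℝ) + 1 := by
      rw [div_lt_iff₀ (by linarith)]
      have := Nat.lt_div_mul_add (a := x) (b := j) (by omega)
      have h : (x:ℝ) < ((x/j : ℕ) : ℝ) * j + j := by exact_mod_cast this
      linarith
    have a3 : (0:ℝ) ≤ ((x / j : ℕ) : ℝ) := by positivity
    have e1 : (x:ℝ)^2/2 * (1/(j:ℝ)^2) = ((x:ℝ)/j)^2/2 := by field_simp
    have e2 : (x:ℝ)/2 * (j:ℝ)⁻¹ = ((x:ℝ)/j)/2 := by field_simp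
    rw [e1, e2]
    generalize ((x / j : ℕ) : ℝ) = m at *
    generalize (x:ℝ)/j = y at *
    rw [abs_le]; constructor <;> nlinarith
  have h2 : ∑ j ∈ Finset.Ioc 0 x, (x:ℝ)/2 * (j:ℝ)⁻¹ ≤ x/2 * (1 + Real.log x) := by
    rw [← Finset.mul_sum]
    apply mul_le_mul_of_nonneg_left _ (by positivity)
    have := harmonic_le_one_add_log x
    rw [harmonic_eq_sum_Icc] at this
    push_cast at this
    exact this
  rw [← Finset.mul_sum] at h1
  obtain ⟨b1, b2⟩ := basel x hx
  generalize (∑ j ∈ Finset.Ioc 0 x, 1/(j:ℝ)^2) = B at *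
  have hl : 0 ≤ Real.log x := Real.log_nonneg hx'
  have k1 := kap_gt
  have k2 := kap_lt
  have b3 : (x:ℝ)^2/2 * kap ≤ (x:ℝ)^2/2 * B + x/2 := by
    have := mul_le_mul_of_nonneg_left b2 (by positivity : (0:ℝ) ≤ (x:ℝ)^2/2)
    have e : (x:ℝ)^2/2 * (B + 1/x) = (x:ℝ)^2/2 * B + x/2 := by field_simp
    linarith
  have b4 : (x:ℝ)^2/2 * B ≤ (x:ℝ)^2/2 * kap := mul_le_mul_of_nonneg_left b1 (by positivity)
  rw [abs_le] at *
  obtain ⟨h1, h1'⟩ := h1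
  have hxl : 0 ≤ x * Real.log x := by positivity
  constructor <;> nlinarith

lemma main_rec (n : ℕ) (hn : 1 ≤ n) : |(n:ℝ) * pp n - kap * Qn n| ≤ 7 * (n:ℝ)^(1/4 : ℝ) * Dn n := by
  rw [rep_n, rep_Q, rep_D, PowerSeries.coeff_mul, PowerSeries.coeff_mul, PowerSeries.coeff_mul, Finset.mul_sum, ← Finset.sum_sub_distrib, Finset.mul_sum]
  apply (Finset.abs_sum_le_sum_abs _ _).trans
  apply Finset.sum_le_sum
  rintro ⟨i, k⟩ hx
  rw [Finset.HasAntidiagonal.mem_antidiagonal] at hx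
  simp only [PowerSeries.coeff_mk] at *
  have e : dp i * Sg k - kap * (dp i * ((k:ℝ) * (k+1)/2)) = dp i * (Sg k - kap * ((k:ℝ) * (k+1)/2)) := by ring
  rw [e, abs_mul, abs_of_nonneg (dp_nonneg i)]
  have : |Sg k - kap * ((k:ℝ) * (k+1)/2)| ≤ 7 * (n:ℝ)^(1/4 : ℝ) * k := by
    rcases Nat.eq_zero_or_pos k with rfl | hk
    · simp [Sg]
    apply (Sg_bound k hk).trans
    rw [mul_comm]
    apply mul_le_mul_of_nonneg_right _ (by positivity)
    have h1 : Real.log k ≤ (k:ℝ)^(1/4:ℝ) / (1/4) := Real.log_le_rpow_div (by positivity) (by norm_num)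
    have h2 : (k:ℝ)^(1/4:ℝ) ≤ (n:ℝ)^(1/4:ℝ) := by
      apply Real.rpow_le_rpow (by positivity) _ (by norm_num)
      exact_mod_cast (by omega : k ≤ n)
    have h3 : 1 ≤ (n:ℝ)^(1/4:ℝ) := Real.one_le_rpow (by exact_mod_cast hn) (by norm_num)
    linarith
  calc _ ≤ dp i * (7 * (n:ℝ)^(1/4 : ℝ) * k) := mul_le_mul_of_nonneg_left this (dp_nonneg i)
    _ = _ := by ring

open Real

/-- fourth root -/
noncomputable def rt (n : ℕ) : ℝ := (n:ℝ)^(1/4 : ℝ)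
lemma rt_pow (n : ℕ) : rt n ^ 4 = n := by
  unfold rt
  rw [← Real.rpow_natCast, ← Real.rpow_mul (by positivity)]; norm_num
lemma rt_nonneg (n : ℕ) : 0 ≤ rt n := by unfold rt; positivity
lemma rt_mono {m n : ℕ} (h : m ≤ n) : rt m ≤ rt n := by
  unfold rt
  apply Real.rpow_le_rpow (by positivity) (by exact_mod_cast h) (by norm_num)
lemma rt_one_le {n : ℕ} (h : 1 ≤ n) : 1 ≤ rt n := by
  unfold rt
  exact Real.one_le_rpow (by exact_mod_cast h) (by norm_num)

/-- sqrt of kap -/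
noncomputable def gg : ℝ := √kap
lemma gg_sq : gg^2 = kap := Real.sq_sqrt (by linarith [kap_gt])
lemma gg_gt : 1.26 < gg := by
  apply Real.lt_sqrt_of_sq_lt; have := kap_gt; norm_num at *; linarith
lemma gg_lt : gg < 1.31 := by
  rw [gg, Real.sqrt_lt' (by norm_num)]; have := kap_lt; norm_num at *; linarith

lemma Dn_succ (n : ℕ) : Dn (n+1) = Dn n + pp n := by simp [Dn, Finset.sum_range_succ]
lemma Qn_succ (n : ℕ) : Qn (n+1) = Qn n + Dn (n+1) := by
  unfold Qn; rw [Finset.sum_range_succ]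
lemma Dn_nonneg (n : ℕ) : 0 ≤ Dn n := Finset.sum_nonneg (fun i _ => by linarith [pp_one_le i])
lemma Dn_pos (n : ℕ) (h : 1 ≤ n) : 0 < Dn n := by
  obtain ⟨n, rfl⟩ := Nat.exists_eq_add_of_le' h
  rw [Dn_succ]; linarith [Dn_nonneg n, pp_one_le n]
lemma Qn_nonneg (n : ℕ) : 0 ≤ Qn n := Finset.sum_nonneg (fun i _ => Dn_nonneg i)

/-- ratio -/
noncomputable def zz (n : ℕ) : ℝ := Qn n / Dn n
/-- ratio -/
noncomputable def yy (n : ℕ) : ℝ := pp n / Dn n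

lemma zz_ge (n : ℕ) (h : 1 ≤ n) : 1 ≤ zz n := by
  unfold zz
  rw [le_div_iff₀ (Dn_pos n h)]
  obtain ⟨n, rfl⟩ := Nat.exists_eq_add_of_le' h
  rw [Qn_succ]; linarith [Qn_nonneg n]
lemma yy_pos (n : ℕ) (h : 1 ≤ n) : 0 < yy n := div_pos (by linarith [pp_one_le n]) (Dn_pos n h)
lemma zz_succ (n : ℕ) (h : 1 ≤ n) : zz (n+1) = 1 + zz n / (1 + yy n) := by
  unfold zz yy
  have := Dn_pos n h
  have h2 := pp_one_le n
  rw [Qn_succ, Dn_succ]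
  field_simp
  ring
lemma yy_bd (n : ℕ) (h : 1 ≤ n) : |rt n ^ 4 * yy n - gg^2 * zz n| ≤ 7 * rt n := by
  have := main_rec n h
  have hD := Dn_pos n h
  rw [rt_pow, gg_sq]
  have e : (n:ℝ) * yy n - kap * zz n = ((n:ℝ) * pp n - kap * Qn n) / Dn n := by
    unfold yy zz; field_simp
  rw [e, abs_div, abs_of_pos hD, div_le_iff₀ hD]
  exact this

lemma ric_up (r g z y : ℝ) (hr : 1 ≤ r) (hg : 1.26 < g) (hg2 : g < 1.31) (hy : 0 < y) (hz : 1 ≤ z)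
    (h : |r^4 * y - g^2 * z| ≤ 7 * r) (hB : z ≤ r^2/g + 10 * r) : 1 + z/(1+y) ≤ r^2/g + 10 * r := by
  by_cases hc : z ≤ r^2/g + 10 * r - 1
  · have : z/(1+y) ≤ z := div_le_self (by linarith) (by linarith)
    linarith
  · push Not at hc
    suffices 1 + z/(1+y) ≤ z by linarith
    have h1 : g^2 * z - 7 * r ≤ r^4 * y := by linarith [(abs_le.mp h).1]
    have hv : r^2/g + 8*r ≤ z - 1 := by linarith
    have hx : 0 < r^2/g := by positivity
    have hx2 : g * (r^2/g) = r^2 := by field_simp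
    have h2 : r^4 ≤ (z-1)*(r^4*y) := by
      calc r^4 = (r^2/g) * (g^2 * (r^2/g)) := by field_simp
        _ ≤ (z-1) * (r^4*y) := by
          apply mul_le_mul (by linarith) _ (by positivity) (by linarith)
          have : g^2 * (r^2/g + 8*r) ≤ g^2 * (z-1) := mul_le_mul_of_nonneg_left hv (by positivity)
          have hgs : 1.5 ≤ g^2 := by nlinarith
          have : 7 * r ≤ g^2 * (8 * r) := by nlinarith
          nlinarith
    have h3 : 1 ≤ (z-1)*y := by
      have : 0 < r^4 := by positivity
      nlinarith
    have : z/(1+y) ≤ z - 1 := by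
      rw [div_le_iff₀ (by linarith)]; linarith
    linarith

lemma ric_low (r r' g z y : ℝ) (hr : 1 ≤ r) (hr' : r'^4 = r^4+1) (hrr : r ≤ r') (hg : 1.26 < g) (hg2 : g < 1.31) (hy : 0 < y) (hz : 1 ≤ z)
    (h : |r^4 * y - g^2 * z| ≤ 7 * r) (hB : r^2/g - 10 * r ≤ z) : r'^2/g - 10 * r' ≤ 1 + z/(1+y) := by
  have hr2 : r'^2 ≤ r^2 + 1/(2*r^2) := by
    apply le_of_sq_le_sq _ (by positivity)
    have : (r^2 + 1/(2*r^2))^2 = r^4 + 1 + 1/(4*r^4) := by field_simp; ring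
    have h4 : (0:ℝ) ≤ 1/(4*r^4) := by positivity
    nlinarith
  have hb' : r'^2/g - 10*r' ≤ r^2/g - 10*r + 1/(2*r^2*g) := by
    have : r'^2/g ≤ (r^2 + 1/(2*r^2))/g := by gcongr
    have e : (r^2 + 1/(2*r^2))/g = r^2/g + 1/(2*r^2*g) := by field_simp
    linarith
  have hs : 1/(2*r^2*g) ≤ 1 := by
    rw [div_le_one (by positivity)]; nlinarith
  by_cases hc : r^2/g - 10*r ≤ 0
  · have : 0 ≤ z/(1+y) := by positivity
    linarith
  · push Not at hc
    set b := r^2/g - 10*r with hb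
    have h1 : r^4 * y ≤ g^2 * z + 7 * r := by linarith [(abs_le.mp h).2]
    have hgb : g * b = r^2 - 10 * g * r := by rw [hb]; field_simp
    have h2 : b * r^4 / (r^4 + g^2*b + 7*r) ≤ z/(1+y) := by
      rw [div_le_div_iff₀ (by positivity) (by positivity)]
      have : b * (r^4*y) ≤ b * (g^2 * z + 7 * r) := mul_le_mul_of_nonneg_left h1 hc.le
      have h5 : 7 * r * b ≤ 7 * r * z := mul_le_mul_of_nonneg_left hB (by positivity)
      have h6 : r^4 * b ≤ r^4 * z := mul_le_mul_of_nonneg_left hB (by positivity)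
      nlinarith
    have h3 : b + 1/(2*r^2*g) - 1 ≤ b * r^4 / (r^4 + g^2*b + 7*r) := by
      rw [le_div_iff₀ (by positivity)]
      set e := 1/(2*r^2*g) with he
      have he0 : 0 < e := by positivity
      have her : r^4 * e = r^2 / (2*g) := by rw [he]; field_simp
      have h7 : b * (g^2*b + 7*r) ≤ r^4 - r^4 * e := by
        have h8 : b ≤ r^2/g := by rw [hb]; linarith
        have h9 : g^2*b+7*r ≤ g * r^2 - r := by
          have : g^2 * b = g * (r^2 - 10*g*r) := by rw [← hgb]; ring
          have hgs : 1.5 ≤ g^2 := by nlinarith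
          have : 1.5 * r ≤ g^2 * r := by gcongr
          nlinarith
        calc b * (g^2*b + 7*r) ≤ r^2/g * (g * r^2 - r) := by
              apply mul_le_mul h8 h9 (by positivity) (by positivity)
          _ = r^4 - r^3/g := by field_simp
          _ ≤ r^4 - r^4 * e := by
              rw [her]
              have : r^2/(2*g) ≤ r^3/g := by
                rw [div_le_div_iff₀ (by positivity) (by positivity)]
                have : r^2 ≤ r^3 := by nlinarith [sq_nonneg r]
                nlinarith
              linarith
      have h10 : (e - 1) * (g^2*b+7*r) ≤ 0 := by
        apply mul_nonpos_of_nonpos_of_nonneg (by linarith) (by positivity)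
      nlinarith
    linarith

lemma zz_bd (n : ℕ) (h : 1 ≤ n) : |zz n - rt n ^2/gg| ≤ 10 * rt n := by
  have hg := gg_gt
  have hg2 := gg_lt
  induction n, h using Nat.le_induction with
  | base =>
    have : zz 1 = 1 := by simp [zz, Qn, Dn, Finset.sum_range_succ, pp_zero]
    have h2 : rt 1 = 1 := by simp [rt]
    rw [this, h2, abs_le]
    have : 0 < 1/gg := by positivity
    have h3 : 1/gg ≤ 1 := by rw [div_le_one (by linarith)]; linarith
    constructor <;> linarith
  | succ n hn ih =>
    have hr := rt_one_le hn
    have hrr := rt_mono (Nat.le_succ n)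
    rw [zz_succ n hn]
    have hr4 : rt (n+1)^4 = rt n ^ 4 + 1 := by rw [rt_pow, rt_pow]; push_cast; ring
    have ih' := abs_le.mp ih
    have h1 := ric_up (rt n) gg (zz n) (yy n) hr hg hg2 (yy_pos n hn) (zz_ge n hn) (yy_bd n hn) (by linarith)
    have h2 := ric_low (rt n) (rt (n+1)) gg (zz n) (yy n) hr hr4 hrr hg hg2 (yy_pos n hn) (zz_ge n hn) (yy_bd n hn) (by linarith)
    have h3 : rt n ^2/gg ≤ rt (n+1)^2/gg := by gcongr
    have h4 : rt n ≤ rt (n+1) := hrr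
    rw [abs_le]; constructor <;> linarith

open Real

lemma z_inv (r g z : ℝ) (hr : 40 ≤ r) (hg : 1.26 < g) (hg2 : g < 1.31) (hz : |z - r^2/g| ≤ 10*r) :
   0 < z ∧ 1/z ≤ 2.62/r^2 ∧ |1/z - g/r^2| ≤ 35/r^3 := by
  have h1 := abs_le.mp hz
  have h2 : 10 * r ≤ r^2/(2*g) := by
    rw [le_div_iff₀ (by positivity)]
    nlinarith
  have h3 : r^2/g = 2*(r^2/(2*g)) := by field_simp
  have h4 : r^2/(2*g) ≤ z := by linarith
  have hp : 0 < r^2/(2*g) := by positivity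
  have hz0 : 0 < z := by linarith
  have h5 : r^2 ≤ z * (2*g) := by rwa [div_le_iff₀ (by positivity)] at h4
  refine ⟨hz0, ?_, ?_⟩
  · rw [div_le_div_iff₀ hz0 (by positivity)]
    nlinarith
  · have e : 1/z - g/r^2 = (r^2/g - z) * (g/(z*r^2)) := by field_simp
    rw [e, abs_mul, abs_of_pos (by positivity : 0 < g/(z*r^2)), abs_sub_comm]
    calc |z - r^2/g| * (g/(z*r^2)) ≤ 10*r * (g/(z*r^2)) := by gcongr
      _ = (10 * g) / (z * r) := by field_simp
      _ ≤ 35/r^3 := by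
        rw [div_le_div_iff₀ (by positivity) (by positivity)]
        have : 10 * g * r^2 ≤ 35 * z := by
          have : 10*g*r^2 ≤ 10 * g * (z*(2*g)) := by gcongr
          have : g^2 ≤ 1.75 := by nlinarith
          nlinarith
        calc 10 * g * r^3 = (10 * g * r^2) * r := by ring
          _ ≤ 35 * z * r := by gcongr
          _ = _ := by ring

lemma stepL (r s g z : ℝ) (hr : 40 ≤ r) (hs : 0 ≤ s) (hrs : s^4 = r^4 - 1) (hg : 1.26 < g) (hg2 : g < 1.31) (hz : |z - r^2/g| ≤ 10*r) :
   |-Real.log (1 - 1/z) - 2*g*(r^2-s^2)| ≤ 150*(r-s) := by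
  obtain ⟨hz0, hx, hx2⟩ := z_inv r g z hr hg hg2 hz
  have hx0 : 0 < 1/z := by positivity
  set x := 1/z with hxd
  have hx3 : x ≤ 1/2 := by
    apply hx.trans; rw [div_le_iff₀ (by positivity)]; nlinarith
  have l1 : Real.log (1-x) ≤ -x := by linarith [Real.log_le_sub_one_of_pos (by linarith : 0 < 1-x)]
  have l2 : -x - 2*x^2 ≤ Real.log (1-x) := by
    have := Real.one_sub_inv_le_log_of_pos (by linarith : 0 < 1-x)
    have h : (1-x)⁻¹ ≤ 1 + x + 2*x^2 := by
      rw [inv_le_iff_one_le_mul₀ (by linarith)]; nlinarith [sq_nonneg x]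
    linarith
  have hi : 0 < 1/r^3 := by positivity
  have hx4 : 2*x^2 ≤ 1/r^3 := by
    calc 2*x^2 ≤ 2*(2.62/r^2)^2 := by gcongr
      _ = (2*2.62^2)/r^4 := by field_simp
      _ ≤ 1/r^3 := by
        rw [div_le_div_iff₀ (by positivity) (by positivity)]
        have : r^4 = r*r^3 := by ring
        have : 0 < r^3 := by positivity
        nlinarith
  have hsr : s ≤ r := by
    by_contra hc
    push Not at hc
    have : r^4 < s^4 := by gcongr
    linarith
  have hsr2 : s^2 ≤ r^2 := by gcongr
  have e1 : (r^2-s^2)*(r^2+s^2) = 1 := by linear_combination -hrs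
  have h5 : 1/(2*r^2) ≤ r^2 - s^2 := by
    rw [div_le_iff₀ (by positivity)]; nlinarith
  have h6 : r^2 - s^2 ≤ 1/r^2 := by
    rw [le_div_iff₀ (by positivity)]; nlinarith
  have h7 : r^2-s^2 ≤ 1/(2*r^2) + 1/(2*r^4) := by
    -- (r²-s²)·2r² = 1 + (r²-s²)²
    have : (r^2-s^2)*(2*r^2) = 1 + (r^2-s^2)^2 := by linear_combination e1
    have h8 : (r^2-s^2)^2 ≤ 1/r^2 := by
      have : r^2 - s^2 ≤ 1 := h6.trans (by rw [div_le_one (by positivity)]; nlinarith)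
      nlinarith
    have h9 : (1/(2*r^2) + 1/(2*r^4))*(2*r^2) = 1 + 1/r^2 := by field_simp
    have : (r^2-s^2)*(2*r^2) ≤ (1/(2*r^2) + 1/(2*r^4))*(2*r^2) := by linarith
    exact le_of_mul_le_mul_right this (by positivity)
  have h10 : 1/(2*r^4) ≤ 1/r^3 * (1/80) := by
    rw [← one_div_mul_one_div, one_div_mul_one_div, one_div_mul_one_div, div_le_div_iff₀ (by positivity) (by positivity)]
    have : r^4 = r*r^3 := by ring
    have : 0 < r^3 := by positivity
    nlinarith
  have h11 : 1/(4*r^3) ≤ r - s := by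
    rw [div_le_iff₀ (by positivity)]
    have e2 : (r-s)*((r+s)*(r^2+s^2)) = 1 := by linear_combination e1
    have : (r+s)*(r^2+s^2) ≤ (2*r)*(2*r^2) := by
      apply mul_le_mul <;> first | positivity | nlinarith
    nlinarith
  have e3 : 1/(4*r^3) = (1/r^3)/4 := by field_simp
  have e4 : 35/r^3 = 35*(1/r^3) := by ring
  have e5 : g/r^2 = 2*g*(1/(2*r^2)) := by field_simp
  rw [e3] at h11
  rw [e4, e5] at hx2
  obtain ⟨h12, h13⟩ := abs_le.mp hx2
  have h14 := mul_le_mul_of_nonneg_left h5 (by linarith : 0 ≤ 2*g)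
  have h15 := mul_le_mul_of_nonneg_left h7 (by linarith : 0 ≤ 2*g)
  have h16 : 2*g*(1/(2*r^4)) ≤ 1/r^3 := by
    have : 2*g*(1/(2*r^4)) ≤ 2.62*(1/r^3 * (1/80)) := by
      apply mul_le_mul (by linarith) h10 (by positivity) (by norm_num)
    linarith
  rw [mul_add] at h15
  rw [abs_le]
  constructor <;> linarith

lemma Qn_ge_one (n : ℕ) (h : 1 ≤ n) : 1 ≤ Qn n := by
  obtain ⟨n, rfl⟩ := Nat.exists_eq_add_of_le' h
  rw [Qn_succ, Dn_succ]; linarith [Qn_nonneg n, Dn_nonneg n, pp_one_le n]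

lemma rt_ge (n : ℕ) (h : 2560000 ≤ n) : 40 ≤ rt n := by
  have h1 := rt_pow n
  have h2 : (2560000:ℝ) ≤ n := by exact_mod_cast h
  by_contra hc
  push Not at hc
  have : rt n ^4 < 40^4 := by
    apply pow_lt_pow_left₀ hc (rt_nonneg n) (by norm_num)
  norm_num at this; linarith

lemma logQ_step (n : ℕ) (h : 2560000 ≤ n) : 
   |Real.log (Qn (n+1)) - Real.log (Qn n) - 2*gg*(rt (n+1)^2 - rt n^2)| ≤ 150*(rt (n+1) - rt n) := by
  have hs := stepL (rt (n+1)) (rt n) gg (zz (n+1)) (rt_ge _ (by omega)) (rt_nonneg n) (by rw [rt_pow, rt_pow]; push_cast; ring) gg_gt gg_lt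
    (zz_bd _ (by omega))
  have : Real.log (1 - 1/zz (n+1)) = Real.log (Qn n) - Real.log (Qn (n+1)) := by
    have q1 := Qn_ge_one n (by omega)
    have q2 := Qn_ge_one (n+1) (by omega)
    rw [← Real.log_div (by linarith) (by linarith)]
    congr 1
    unfold zz
    rw [eq_div_iff (by linarith), one_div_div, sub_mul, div_mul_cancel₀ _ (by linarith), Qn_succ]
    ring
  rw [this] at hs
  rwa [neg_sub] at hs

lemma logQ (M N : ℕ) (h : 2560000 ≤ M) (hN : M ≤ N) : 
   |Real.log (Qn N) - Real.log (Qn M) - 2*gg*(rt N^2 - rt M^2)| ≤ 150*(rt N - rt M) := by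
  induction N, hN using Nat.le_induction with
  | base => simp
  | succ N hN ih =>
    have := logQ_step N (by omega)
    rw [abs_le] at *
    constructor <;> linarith

lemma Pn_bd (n : ℕ) (h : 2560000 ≤ n) : 0 < (n:ℝ) * pp n / Qn n ∧ 1 ≤ (n:ℝ) * pp n / Qn n ∧ |Real.log ((n:ℝ) * pp n / Qn n) - Real.log kap| ≤ 19 / rt n := by
  have hD := Dn_pos n (by omega)
  have hQ := Qn_ge_one n (by omega)
  have hr := rt_ge n h
  obtain ⟨hz0, hx, -⟩ := z_inv (rt n) gg (zz n) hr gg_gt gg_lt (zz_bd n (by omega))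
  have hm := main_rec n (by omega)
  rw [← rt] at hm
  set P := (n:ℝ) * pp n / Qn n with hP
  have h1 : |P - kap| ≤ 19 / rt n := by
    have : P - kap = (n * pp n - kap * Qn n) / Qn n := by rw [hP]; field_simp
    rw [this, abs_div, abs_of_pos (by linarith : 0 < Qn n), div_le_iff₀ (by linarith)]
    apply hm.trans
    have h2 : Dn n = (1/zz n) * Qn n := by unfold zz; field_simp
    rw [h2]
    calc 7 * rt n * (1 / zz n * Qn n) ≤ 7 * rt n * (2.62/rt n^2 * Qn n) := by gcongr
      _ = (7*2.62) / rt n * Qn n := by field_simp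
      _ ≤ _ := by gcongr; norm_num
  have h3 : 19 / rt n ≤ 0.5 := by rw [div_le_iff₀ (by linarith)]; linarith
  have hk := kap_gt
  have h4 := abs_le.mp h1
  have hP1 : 1 ≤ P := by norm_num at *; linarith
  have hk1 : 1 ≤ kap := by norm_num at *; linarith
  refine ⟨by linarith, hP1, ?_⟩
  have a1 := Real.log_le_sub_one_of_pos (by positivity : 0 < P / kap)
  have a2 := Real.log_le_sub_one_of_pos (by positivity : 0 < kap / P)
  rw [Real.log_div (by linarith) (by linarith)] at a1 a2
  have b1 : P/kap - 1 ≤ 19/rt n := by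
    rw [show P/kap - 1 = (P-kap)/kap by field_simp]
    rw [div_le_iff₀ (by linarith)]
    have : 0 < 19/rt n := by positivity
    nlinarith
  have b2 : kap/P - 1 ≤ 19/rt n := by
    rw [show kap/P - 1 = (kap-P)/P by field_simp]
    rw [div_le_iff₀ (by linarith)]
    have : 0 < 19/rt n := by positivity
    nlinarith
  rw [abs_le]; constructor <;> linarith

lemma R2 (N : ℕ) (h : 2560000 ≤ N) : 2*gg*rt N^2 - 260 * rt N ≤ Real.log (pp N) := by
  have hr := rt_ge N h
  obtain ⟨h0, h1, -⟩ := Pn_bd N h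
  have hN : (0:ℝ) < N := by exact_mod_cast (by omega : 0 < N)
  have hQ := Qn_ge_one N (by omega)
  have hp := pp_one_le N
  have e : Real.log ((N:ℝ) * pp N / Qn N) = Real.log N + Real.log (pp N) - Real.log (Qn N) := by
    rw [Real.log_div (by positivity) (by linarith), Real.log_mul (by positivity) (by positivity)]
  have h2 := Real.log_nonneg h1
  have h3 : Real.log N ≤ 4 * rt N := by
    rw [← rt_pow N, Real.log_pow]
    have := Real.log_le_sub_one_of_pos (by linarith : 0 < rt N)
    push_cast; linarith
  have h4 := (abs_le.mp (logQ 2560000 N le_rfl h)).1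
  have h5 := Real.log_nonneg (Qn_ge_one 2560000 (by norm_num))
  have h6 : rt 2560000 = 40 := by
    have := rt_pow 2560000
    have h7 : rt 2560000 ^ 4 = 40^4 := by rw [this]; norm_num
    exact (pow_left_inj₀ (rt_nonneg _) (by norm_num) (by norm_num)).mp h7
  rw [h6] at h4
  have := gg_lt
  nlinarith

/-- twentieth root -/
noncomputable def YY (n : ℕ) : ℝ := (n:ℝ)^(1/20 : ℝ)
lemma YY_pow (n : ℕ) : YY n ^ 20 = n := by
  unfold YY
  rw [← Real.rpow_natCast, ← Real.rpow_mul (by positivity)]; norm_num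
lemma YY_nonneg (n : ℕ) : 0 ≤ YY n := by unfold YY; positivity
lemma YY_rt (n : ℕ) : rt n = YY n ^ 5 := by
  unfold YY rt
  rw [← Real.rpow_natCast, ← Real.rpow_mul (by positivity)]; norm_num

set_option maxHeartbeats 1000000 in
lemma R1 (N k : ℕ) (hY : 3 ≤ YY N) (hk : (k:ℝ) ≤ YY N ^12) : k ≤ N ∧ 
    |Real.log (pp (N-k)) - Real.log (pp N) + gg / YY N^10 * k| ≤ 300 / YY N ^ 2 := by
  set Y := YY N with hYd
  have hYN := YY_pow N
  rw [← hYd] at hYN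
  have hrN := YY_rt N
  rw [← hYd] at hrN
  have hY8 : (3:ℝ)^8 ≤ Y^8 := by gcongr
  have hY20 : (3:ℝ)^20 ≤ Y^20 := by gcongr
  have hk2 : (2:ℝ) * k ≤ N := by
    rw [← hYN, show Y^20 = Y^8*Y^12 by ring]
    have : 0 < Y^12 := by positivity
    norm_num at hY8
    nlinarith
  have hk2' : 2 * k ≤ N := by exact_mod_cast hk2
  have hNb : 3^20 ≤ N := by
    rw [hYN] at hY20; exact_mod_cast hY20
  norm_num at hNb
  refine ⟨by omega, ?_⟩
  obtain ⟨M, rfl⟩ := Nat.exists_eq_add_of_le' (by omega : k ≤ N)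
  rw [Nat.add_sub_cancel]
  have hM : 2560000 ≤ M := by omega
  obtain ⟨m0, m1, m2⟩ := Pn_bd M hM
  obtain ⟨n0, n1, n2⟩ := Pn_bd (M+k) (by omega)
  have hq := logQ M (M+k) hM (by omega)
  have hr := rt_ge M hM
  have hr4 := rt_pow M
  have hpM := pp_one_le M
  have hpN := pp_one_le (M+k)
  have hQM := Qn_ge_one M (by omega)
  have hQN := Qn_ge_one (M+k) (by omega)
  have hM0 : (0:ℝ) < M := by exact_mod_cast (by omega : 0 < M)
  have hN0 : (0:ℝ) < ((M+k : ℕ):ℝ) := by exact_mod_cast (by omega : 0 < M+k)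
  rw [Real.log_div (by positivity) (by linarith), Real.log_mul (by positivity) (by positivity)] at m2 n2
  rw [hrN] at hq n2
  have hkN : ((M+k : ℕ):ℝ) = M + k := by push_cast; ring
  have hlog : Real.log ((M+k : ℕ):ℝ) - Real.log M ≤ 2/Y^8 := by
    rw [← Real.log_div (by positivity) (by positivity)]
    have := Real.log_le_sub_one_of_pos (by positivity : 0 < ((M+k : ℕ):ℝ)/M)
    apply this.trans
    rw [hkN, show ((M:ℝ)+k)/M - 1 = k/M by field_simp; ring, div_le_div_iff₀ hM0 (by positivity)]
    have : (k:ℝ) * Y^8 ≤ Y^12*Y^8 := by gcongr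
    rw [hkN] at hk2
    have e : Y^12*Y^8 = M+k := by rw [← hkN, ← hYN]; ring
    linarith
  have hlog0 : 0 ≤ Real.log ((M+k : ℕ):ℝ) - Real.log M := by
    rw [sub_nonneg]; apply Real.log_le_log hM0; rw [hkN]; linarith [Nat.cast_nonneg (α := ℝ) k]
  set R := Y^5 with hR
  set S := rt M with hS
  have hR0 : 0 < R := by positivity
  have hRS : S ≤ R := by rw [← hrN]; exact rt_mono (by omega)
  have hR4 : R^4 = S^4 + k := by
    rw [hr4, hR, ← pow_mul, hYN, hkN]
  have hS2 : R/2 ≤ S := by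
    by_contra hc
    push Not at hc
    have : S^4 < (R/2)^4 := by gcongr
    have h2 : (2:ℝ)*k ≤ R^4 := by rw [hR4, hr4]; rw [hkN] at hk2; exact hk2
    have e : (R/2)^4 = R^4/16 := by ring
    have : 0 < R^4 := by positivity
    linarith
  have hSi : 19/S ≤ 38/R := by
    rw [div_le_div_iff₀ (by linarith) hR0]; linarith
  have hk0 : (0:ℝ) ≤ k := Nat.cast_nonneg k
  have hRSd : R - S ≤ k/R^3 := by
    rw [le_div_iff₀ (by positivity)]
    have e : (R-S)*(R^3+R^2*S+R*S^2+S^3) = k := by linear_combination hR4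
    have h3 : R^3 ≤ R^3+R^2*S+R*S^2+S^3 := by
      have : 0 ≤ R^2*S+R*S^2+S^3 := by positivity
      linarith
    have := mul_le_mul_of_nonneg_left h3 (by linarith : 0 ≤ R-S)
    linarith
  have hsq0 : 0 ≤ R^2 - S^2 := by
    have : S^2 ≤ R^2 := by gcongr
    linarith
  have hsq1 : R^2 - S^2 ≤ k/R^2 := by
    rw [le_div_iff₀ (by positivity)]
    have e : (R^2-S^2)*(R^2+S^2) = k := by linear_combination hR4
    have h3 : R^2 ≤ R^2+S^2 := by linarith [sq_nonneg S]
    have := mul_le_mul_of_nonneg_left h3 hsq0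
    linarith
  have hsq : 2*(R^2-S^2) - k/R^2 ≤ k^2/R^6 ∧ 0 ≤ 2*(R^2-S^2) - k/R^2 := by
    have e : 2*(R^2-S^2) - k/R^2 = (R^2-S^2)^2/R^2 := by
      field_simp; linear_combination hR4
    rw [e]
    refine ⟨?_, by positivity⟩
    calc (R^2-S^2)^2/R^2 ≤ (k/R^2)^2/R^2 := by gcongr
      _ = k^2/R^6 := by field_simp
  have c1 : 57/R ≤ 57/Y^2 := by
    apply div_le_div_of_nonneg_left (by norm_num) (by positivity)
    rw [hR]; exact pow_le_pow_right₀ (by linarith) (by norm_num)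
  have c2 : 2/Y^8 ≤ 2/Y^2 := by
    apply div_le_div_of_nonneg_left (by norm_num) (by positivity)
    exact pow_le_pow_right₀ (by linarith) (by norm_num)
  have c3 : k/R^3 ≤ 1/Y^2 := by
    rw [div_le_div_iff₀ (by positivity) (by positivity), hR]
    calc (k:ℝ)*Y^2 ≤ Y^12*Y^2 := by gcongr
      _ = Y^14 := by ring
      _ ≤ Y^15 := pow_le_pow_right₀ (by linarith) (by norm_num)
      _ = _ := by ring
  have c4 : (k:ℝ)^2/R^6 ≤ 1/Y^2 := by
    rw [div_le_div_iff₀ (by positivity) (by positivity), hR]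
    calc (k:ℝ)^2*Y^2 ≤ (Y^12)^2*Y^2 := by gcongr
      _ = Y^26 := by ring
      _ ≤ Y^30 := pow_le_pow_right₀ (by linarith) (by norm_num)
      _ = _ := by ring
  have hY2 : 0 < 1/Y^2 := by positivity
  have d1 : 57/Y^2 = 57*(1/Y^2) := by ring
  have d2 : 2/Y^2 = 2*(1/Y^2) := by ring
  have d3 : 300/Y^2 = 300*(1/Y^2) := by ring
  have d4 : 57/R = 19/R + 38/R := by ring
  have d5 : gg / Y^10*k = gg*(k/R^2) := by rw [hR]; ring
  have hgl := gg_lt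
  have hgg := gg_gt
  have f1 : gg * (2*(R^2-S^2) - k/R^2) ≤ 2*(1/Y^2) := by
    calc _ ≤ 2 * (2*(R^2-S^2) - k/R^2) := by gcongr; exact hsq.2; linarith
      _ ≤ _ := by linarith [hsq.1]
  have f0 : 0 ≤ gg * (2*(R^2-S^2) - k/R^2) := by
    apply mul_nonneg (by linarith) hsq.2
  have f2 : gg * (2*(R^2-S^2) - k/R^2) = 2*gg*(R^2-S^2) - gg*(k/R^2) := by ring
  rw [d5, d3]
  have m2' := abs_le.mp m2
  have n2' := abs_le.mp n2
  have hq' := abs_le.mp hq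
  clear hY8 hY20 hk2 hr4 hM0 hN0 hr hR4 hS2 hRS hsq1 hsq0 hk hYN hrN hsq hR0 hk0 hpM hpN hQM hQN m0 m1 n0 n1 hkN m2 n2 hq
  rw [abs_le]
  constructor <;> linarith

open Real

/-- shifted partition function, truncated at zero -/
noncomputable def pt (N k : ℕ) : ℝ := if k ≤ N then pp (N-k) else 0

lemma pt_bd (N k : ℕ) (hY : 1000 ≤ YY N) (hE : 10 * YY N^100 ≤ Real.exp (YY N)) :
    |pt N k - pp N * Real.exp (-(gg / YY N^10 * k))| ≤ 
      pp N * (600 / YY N ^ 2 * Real.exp (-(gg / YY N^10 * k)) + 1/YY N^60) := by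
  have key : ∀ k : ℕ, (k:ℝ) ≤ YY N ^12 → |pt N k - pp N * Real.exp (-(gg / YY N^10 * k))| ≤ 
      pp N * (600 / YY N ^ 2 * Real.exp (-(gg / YY N^10 * k))) := by
    intro k hk
    obtain ⟨h1, h2⟩ := R1 N k (by linarith) hk
    have hp := pp_one_le N
    have hp2 := pp_one_le (N-k)
    set t := gg / YY N^10 * k
    set δ := Real.log (pp (N-k)) - Real.log (pp N) + t with hδ
    have e : pt N k = pp N * Real.exp (-t) * Real.exp δ := by
      rw [pt, if_pos h1, mul_assoc, ← Real.exp_add, hδ, show -t + (Real.log (pp (N-k)) - Real.log (pp N) + t) = Real.log (pp (N-k)) - Real.log (pp N) by ring, Real.exp_sub, Real.exp_log (by linarith), Real.exp_log (by linarith)]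
      field_simp
    have h3 : 300 / YY N^2 ≤ 1 := by
      rw [div_le_one (by positivity)]; nlinarith
    have h4 := Real.abs_exp_sub_one_le (h2.trans h3)
    rw [e, show pp N * Real.exp (-t) * Real.exp δ - pp N * Real.exp (-t) = pp N * Real.exp (-t) * (Real.exp δ - 1) by ring, abs_mul, abs_of_pos (by positivity)]
    calc pp N * Real.exp (-t) * |Real.exp δ - 1| ≤ pp N * Real.exp (-t) * (2 * (300/YY N^2)) := by
          gcongr; linarith
      _ = _ := by ring
  have hp := pp_one_le N
  set Y := YY N
  have hY0 : 0 < Y := by linarith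
  by_cases hk : (k:ℝ) ≤ Y^12
  · apply (key k hk).trans
    gcongr
    have : 0 ≤ 1/Y^60 := by positivity
    linarith
  · push Not at hk
    set K := ⌊Y^12⌋₊ with hK
    have hK1 : (K:ℝ) ≤ Y^12 := Nat.floor_le (by positivity)
    have hK2 : Y^12 < K + 1 := Nat.lt_floor_add_one _
    have hKk : K ≤ k := by
      have : (K:ℝ) < k := by linarith
      exact_mod_cast this.le
    have hkey := key K hK1
    have hKN := (R1 N K (by linarith) hK1).1
    have h0 : 0 ≤ pt N k := by
      unfold pt; split_ifs
      · linarith [pp_one_le (N-k)]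
      · exact le_rfl
    have h1 : pt N k ≤ pt N K := by
      unfold pt; rw [if_pos hKN]; split_ifs
      · exact pp_monotone (by omega)
      · linarith [pp_one_le (N-K)]
    have hg := gg_gt
    have hY10 : 0 < gg/Y^10 := by positivity
    have hsm : Real.exp (-(gg / Y^10 * K)) ≤ 1 / (3 * Y^60) := by
      have h2 : Y ≤ gg / Y^10*K := by
        calc Y ≤ 1.26*(Y^2 - 1) := by nlinarith
          _ ≤ 1.26 * ((Y^12-1)/Y^10) := by
            gcongr
            rw [le_div_iff₀ (by positivity)]
            have : 1 ≤ Y^10 := one_le_pow₀ (by linarith)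
            nlinarith
          _ ≤ gg * (K/Y^10) := by
            have : 0 ≤ (Y^12-1) := by have : 1 ≤ Y^12 := one_le_pow₀ (by linarith)
                                      linarith
            gcongr; linarith
          _ = _ := by ring
      have h3 : Real.exp (-(gg/Y^10*K)) ≤ Real.exp (-Y) := Real.exp_le_exp.mpr (by linarith)
      apply h3.trans
      rw [Real.exp_neg, inv_eq_one_div]
      apply one_div_le_one_div_of_le (by positivity)
      have : Y^60 ≤ Y^100 := pow_le_pow_right₀ (by linarith) (by norm_num)
      have : 0 < Y^60 := by positivity
      linarith
    have hek : Real.exp (-(gg / Y^10 * k)) ≤ Real.exp (-(gg / Y^10 * K)) := by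
      apply Real.exp_le_exp.mpr
      have : gg / Y^10 * K ≤ gg / Y^10 * k := by gcongr
      linarith
    have hep := Real.exp_pos (-(gg / Y^10 * k))
    have hep' := Real.exp_pos (-(gg / Y^10 * K))
    set ek := Real.exp (-(gg / Y^10 * k))
    set eK := Real.exp (-(gg / Y^10 * K))
    have h600 : 600 / Y^2 ≤ 1 := by
      rw [div_le_one (by positivity)]; nlinarith
    have h5 : pt N K ≤ pp N * (2 * eK) := by
      have := (abs_le.mp hkey).2
      have h6 : pp N * (600/Y^2*eK) ≤ pp N * (1 * eK) := by gcongr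
      linarith
    have h7 : pt N K ≤ pp N * (1/Y^60) := by
      apply h5.trans
      gcongr
      have : 1/(3*Y^60) = 1/Y^60/3 := by field_simp
      have : 0 < 1/Y^60 := by positivity
      linarith
    have h8 : pp N * ek ≤ pp N * (1/Y^60) := by
      gcongr
      have : 1/(3*Y^60) = 1/Y^60/3 := by field_simp
      have : 0 < 1/Y^60 := by positivity
      linarith
    have h9 : 0 ≤ pp N * (600/Y^2*ek) := by positivity
    have h10 : 0 ≤ pp N * ek := by positivity
    rw [mul_add, abs_le]
    constructor <;> linarith

/-- evaluation of nonnegative power series -/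
def ev (q : ℝ) (f : PowerSeries ℝ) (v : ℝ) : Prop := 
  (∀ n, 0 ≤ PowerSeries.coeff n f) ∧ HasSum (fun n => PowerSeries.coeff n f * q^n) v

lemma ev_mul (q : ℝ) (hq : 0 < q) (f g : PowerSeries ℝ) (v w : ℝ) (hf : ev q f v) (hg : ev q g w) : ev q (f*g) (v*w) := by
  refine ⟨mul_nonneg_coeff hf.1 hg.1, ?_⟩
  have a1 : ∀ n, 0 ≤ PowerSeries.coeff n f * q^n := fun n => mul_nonneg (hf.1 n) (by positivity)
  have a2 : ∀ n, 0 ≤ PowerSeries.coeff n g * q^n := fun n => mul_nonneg (hg.1 n) (by positivity)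
  have s1 : Summable (fun n => ‖PowerSeries.coeff n f * q^n‖) := by
    simp_rw [Real.norm_of_nonneg (a1 _)]; exact hf.2.summable
  have s2 : Summable (fun n => ‖PowerSeries.coeff n g * q^n‖) := by
    simp_rw [Real.norm_of_nonneg (a2 _)]; exact hg.2.summable
  have t1 := tsum_mul_tsum_eq_tsum_sum_antidiagonal_of_summable_norm s1 s2
  have t2 := (summable_norm_sum_mul_antidiagonal_of_summable_norm s1 s2).of_norm
  rw [hf.2.tsum_eq, hg.2.tsum_eq] at t1
  rw [t1]
  suffices hh : (fun n => PowerSeries.coeff n (f*g) * q^n) = fun n => ∑ kl ∈ Finset.HasAntidiagonal.antidiagonal n,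
        (PowerSeries.coeff kl.1 f * q ^ kl.1 * (PowerSeries.coeff kl.2 g * q ^ kl.2)) by
    rw [hh]; exact t2.hasSum
  funext n
  rw [PowerSeries.coeff_mul, Finset.sum_mul]
  apply Finset.sum_congr rfl
  intro x hx
  rw [Finset.HasAntidiagonal.mem_antidiagonal] at hx
  rw [← hx, pow_add]; ring

lemma ev_X (q : ℝ) (m : ℕ) : ev q (PowerSeries.X^m) (q^m) := by
  refine ⟨fun n => by rw [PowerSeries.coeff_X_pow]; split_ifs <;> norm_num, ?_⟩
  have := hasSum_ite_eq m (q^m)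
  convert this using 2 with n
  rw [PowerSeries.coeff_X_pow]; split_ifs with h
  · rw [h, one_mul]
  · simp

lemma ev_inv (q : ℝ) (hq : 0 < q) (hq1 : q < 1) (m : ℕ) : 
    ev q ((1 - (PowerSeries.X : PowerSeries ℝ)^(m+1))⁻¹) ((1 - q^(m+1))⁻¹) := by
  refine ⟨fun n => by rw [inv_coeff]; split_ifs <;> norm_num, ?_⟩
  have hi : Function.Injective (fun j : ℕ => (m+1)*j) := by
    intro a b h; simpa using h
  rw [← hi.hasSum_iff]
  · have := hasSum_geometric_of_lt_one (by positivity : 0 ≤ q^(m+1)) (pow_lt_one₀ hq.le hq1 (by omega))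
    convert this using 2 with j
    simp only [Function.comp, inv_coeff]
    rw [if_pos (Dvd.intro _ rfl), one_mul, pow_mul]
  · intro n hn
    rw [inv_coeff, if_neg, zero_mul]
    rintro ⟨j, rfl⟩
    exact hn ⟨j, rfl⟩

/-- finite q-Pochhammer -/
noncomputable def rp (q : ℝ) (k : ℕ) : ℝ := ∏ m ∈ Finset.range k, (1 - q^(m+1))

lemma rp_succ (q : ℝ) (k : ℕ) : rp q (k+1) = rp q k * (1 - q^(k+1)) := by
  simp [rp, Finset.prod_range_succ]
lemma qpow_lt (q : ℝ) (hq : 0 < q) (hq1 : q < 1) (k : ℕ) : 0 < 1 - q^(k+1) := by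
  have := pow_lt_one₀ hq.le hq1 (by omega : k+1 ≠ 0)
  linarith
lemma rp_pos (q : ℝ) (hq : 0 < q) (hq1 : q < 1) (k : ℕ) : 0 < rp q k :=
  Finset.prod_pos (fun m _ => qpow_lt q hq hq1 m)

lemma ev_RR (q : ℝ) (hq : 0 < q) (hq1 : q < 1) (k : ℕ) : ev q (RR k) ((rp q k)⁻¹) := by
  induction k with
  | zero => 
    rw [RR_zero]
    simpa [rp] using ev_X q 0
  | succ k ih =>
    have e : RR (k+1) = RR k * (1 - (PowerSeries.X : PowerSeries ℝ) ^ (k+1))⁻¹ := by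
      rw [RR, Finset.prod_range_succ, ← RR]
    rw [e, rp_succ, mul_inv]
    exact ev_mul q hq _ _ _ _ ih (ev_inv q hq hq1 k)

/-- real value of Durfee term -/
noncomputable def TT (q : ℝ) (l a : ℕ) : ℝ := q^(a*(a+l)) * ((rp q a)⁻¹ * (rp q (a+l))⁻¹)

lemma ev_TT (q : ℝ) (hq : 0 < q) (hq1 : q < 1) (l a : ℕ) : HasSum (fun n => bb l a n * q^n) (TT q l a) :=
  (ev_mul q hq _ _ _ _ (ev_X q _) (ev_mul q hq _ _ _ _ (ev_RR q hq hq1 a) (ev_RR q hq hq1 (a+l)))).2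

lemma rp_bd (t : ℝ) (ht : 0 < t) (M : ℕ) : (rp (Real.exp (-t)) M)⁻¹ ≤ Real.exp (kap/t) := by
  set q := Real.exp (-t) with hqd
  have hq : 0 < q := Real.exp_pos _
  have hq1 : q < 1 := by rw [hqd, Real.exp_lt_one_iff]; linarith
  have hr := rp_pos q hq hq1 M
  rw [← Real.exp_log (inv_pos.mpr hr), Real.exp_le_exp, Real.log_inv]
  have e : -Real.log (rp q M) = ∑ m ∈ Finset.range M, -Real.log (1 - q^(m+1)) := by
    rw [rp, Real.log_prod (fun m _ => (qpow_lt q hq hq1 m).ne'), Finset.sum_neg_distrib]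
  rw [e]
  have h1 : HasSum (fun n : ℕ => ∑ m ∈ Finset.range M, (q^(m+1))^(n+1)/((n:ℝ)+1)) (∑ m ∈ Finset.range M, -Real.log (1 - q^(m+1))) := by
    apply hasSum_sum
    intro m _
    apply Real.hasSum_pow_div_log_of_abs_lt_one
    rw [abs_of_pos (by positivity)]
    linarith [qpow_lt q hq hq1 m]
  have h2 : HasSum (fun n : ℕ => (1/((n:ℝ)+1)^2) / t) (kap/t) := by
    apply HasSum.div_const
    have := (hasSum_nat_add_iff' (f := fun n : ℕ => 1/(n:ℝ)^2) 1).mpr hasSum_zeta_two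
    simpa [kap] using this
  apply hasSum_le _ h1 h2
  intro n
  rw [← Finset.sum_div]
  have h3 : ∑ m ∈ Finset.range M, (q^(m+1))^(n+1) ≤ 1/(((n:ℝ)+1)*t) := by
    set p := q^(n+1) with hp
    have hp0 : 0 < p := by positivity
    have hp1 : p < 1 := by linarith [qpow_lt q hq hq1 n]
    have e2 : ∀ m, (q^(m+1))^(n+1) = p * p^m := by
      intro m; rw [hp, ← pow_mul, ← pow_mul, ← pow_add]; congr 1; ring
    simp_rw [e2]
    rw [← Finset.mul_sum]
    have h4 : ∑ m ∈ Finset.range M, p^m ≤ (1-p)⁻¹ :=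
      sum_le_hasSum _ (fun i _ => by positivity) (hasSum_geometric_of_lt_one hp0.le hp1)
    have h5 : p = Real.exp (-(((n:ℝ)+1)*t)) := by
      rw [hp, hqd, ← Real.exp_nat_mul]; congr 1; push_cast; ring
    calc p * ∑ m ∈ Finset.range M, p^m ≤ p * (1-p)⁻¹ := by gcongr
      _ ≤ _ := by
        set s := ((n:ℝ)+1)*t with hs
        have hs0 : 0 < s := by positivity
        have h6 : s * p ≤ 1 - p := by
          have := Real.add_one_le_exp s
          have h7 : p * Real.exp s = 1 := by rw [h5, ← Real.exp_add]; simp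
          have := mul_le_mul_of_nonneg_left this hp0.le
          linarith
        rw [← div_eq_mul_inv, div_le_div_iff₀ (by linarith) hs0]
        linarith
  calc _ ≤ (1/(((n:ℝ)+1)*t)) / ((n:ℝ)+1) := by gcongr
    _ = _ := by field_simp

lemma TT_bd (t : ℝ) (ht : 0 < t) (l a : ℕ) : TT (Real.exp (-t)) l a ≤ Real.exp (kap/t) := by
  have hb := rp_bd t ht
  set q := Real.exp (-t) with hqd
  have hq : 0 < q := Real.exp_pos _
  have hq1 : q < 1 := by rw [hqd, Real.exp_lt_one_iff]; linarith
  apply le_of_tendsto' (ev_TT q hq hq1 l a).tendsto_sum_nat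
  intro M
  have h1 := ev_RR q hq hq1 M
  calc _ ≤ ∑ n ∈ Finset.range M, PowerSeries.coeff n (RR M) * q^n := by
        apply Finset.sum_le_sum
        intro n hn
        simp at hn
        rw [RR_pp hn.le]
        gcongr
        exact bb_le ..
    _ ≤ (rp q M)⁻¹ := sum_le_hasSum _ (fun i _ => mul_nonneg (h1.1 i) (by positivity)) h1.2
    _ ≤ _ := hb M

open Real

lemma TT_succ (q : ℝ) (hq : 0 < q) (hq1 : q < 1) (l j : ℕ) : 
    TT q l (j+1) * ((1 - q^(j+1)) * (1 - q^(j+1)*q^l)) * q = TT q l j * ((q^(j+1))^2*q^l) := by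
  unfold TT
  have h1 := qpow_lt q hq hq1 j
  have h2 := qpow_lt q hq hq1 (j+l)
  have h3 := rp_pos q hq hq1 j
  have h4 := rp_pos q hq hq1 (j+l)
  rw [show j+1+l = (j+l)+1 by ring, rp_succ, rp_succ, show (j+1)*(j+l+1) = j*(j+l) + (2*j+l+1) by ring, 
    show q^(j+1)*q^l = q^(j+l+1) by rw [← pow_add]; congr 1; ring]
  rw [pow_add q (j*(j+l))]
  field_simp
  ring

/-- weighted Durfee term -/
noncomputable def HH (t x : ℝ) (l a : ℕ) : ℝ := TT (Real.exp (-t)) l a * Real.exp (t*((a:ℝ)-x)^2)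

lemma HH_succ (t x : ℝ) (ht : 0 < t) (l j : ℕ) (u w : ℝ) (hu : u = Real.exp (-(t*x))) (hw : w = Real.exp (-t)^l) (huw : u * (1+w) = 1) :
    HH t x l (j+1) * ((1 - Real.exp (-t)^(j+1)) * (1 - Real.exp (-t)^(j+1)*w)) = HH t x l j * ((1-u)*(1-u*w)) := by
  have hq : 0 < Real.exp (-t) := Real.exp_pos _
  have hq1 : Real.exp (-t) < 1 := by rw [Real.exp_lt_one_iff]; linarith
  have h := TT_succ (Real.exp (-t)) hq hq1 l j
  unfold HH
  rw [← hw] at h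
  set q := Real.exp (-t) with hqd
  have hv : q^(j+1) = Real.exp (-(t*(j+1))) := by
    rw [hqd, ← Real.exp_nat_mul]; congr 1; push_cast; ring
  have e1 : Real.exp (t*(((j+1:ℕ):ℝ)-x)^2) * (q^(j+1))^2 = Real.exp (t*((j:ℝ)-x)^2) * u^2 * q := by
    rw [hv, hu, hqd, ← Real.exp_nat_mul, ← Real.exp_nat_mul, ← Real.exp_add, ← Real.exp_add, ← Real.exp_add]
    congr 1; push_cast; ring
  have e2 : (1-u)*(1-u*w) = u^2*w := by
    have : u * w = 1 - u := by linear_combination huw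
    rw [this]; linear_combination (-u) * this
  rw [e2]
  have hv0 : 0 < q^(j+1) := by positivity
  have : (q^(j+1))^2 * q ≠ 0 := by positivity
  apply mul_right_cancel₀ this
  linear_combination (Real.exp (t*(((j+1:ℕ):ℝ)-x)^2) * (q^(j+1))^2) * h + (TT q l j * (q^(j+1))^2*w) * e1

lemma HH_pos (t x : ℝ) (ht : 0 < t) (l j : ℕ) : 0 ≤ HH t x l j := by
  have hq : 0 < Real.exp (-t) := Real.exp_pos _
  have hq1 : Real.exp (-t) < 1 := by rw [Real.exp_lt_one_iff]; linarith
  unfold HH TT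
  have h3 := rp_pos _ hq hq1 j
  have h4 := rp_pos _ hq hq1 (j+l)
  positivity

lemma HH_max (t x : ℝ) (ht : 0 < t) (hx : 0 ≤ x) (l a : ℕ) (hux : Real.exp (-(t*x)) * (1+Real.exp (-t)^l) = 1) :
    HH t x l a ≤ HH t x l ⌊x⌋₊ := by
  have hq : 0 < Real.exp (-t) := Real.exp_pos _
  have hq1 : Real.exp (-t) < 1 := by rw [Real.exp_lt_one_iff]; linarith
  have hs := fun j => HH_succ t x ht l j _ _ rfl rfl hux
  set w := Real.exp (-t)^l with hw
  have hw0 : 0 < w := by positivity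
  have hw1 : w ≤ 1 := pow_le_one₀ hq.le hq1.le
  have hu0 : 0 < Real.exp (-(t*x)) := Real.exp_pos _
  set u := Real.exp (-(t*x)) with hu
  have hu1 : u < 1 := by nlinarith
  have huw : u * w < 1 := by nlinarith
  have hv : ∀ j : ℕ, Real.exp (-t)^(j+1) = Real.exp (-(t*(j+1))) := by
    intro j; rw [← Real.exp_nat_mul]; congr 1; push_cast; ring
  have hvlt := fun j => qpow_lt (Real.exp (-t)) hq hq1 j
  have hp := HH_pos t x ht l
  rcases le_total a ⌊x⌋₊ with h | h
  · have key : ∀ m n : ℕ, m ≤ n → n ≤ ⌊x⌋₊ → HH t x l m ≤ HH t x l n := by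
      intro m n hmn
      induction n, hmn using Nat.le_induction with
      | base => intro _; exact le_rfl
      | succ j hj ih =>
        intro hjx
        apply (ih (by omega)).trans
        have hjx' : (j:ℝ)+1 ≤ x := by
          have := (Nat.le_floor_iff hx).mp hjx
          exact_mod_cast this
        have huv : u ≤ Real.exp (-t)^(j+1) := by
          rw [hv, hu, Real.exp_le_exp]
          have := mul_le_mul_of_nonneg_left hjx' ht.le
          linarith
        have h1 := hs j
        have h2 := hvlt j
        set v := Real.exp (-t)^(j+1)
        have hvw : u*w ≤ v*w := by gcongr
        have hv1 : v * w < 1 := by nlinarith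
        have h3 : (1-v)*(1-v*w) ≤ (1-u)*(1-u*w) := by
          apply mul_le_mul <;> linarith
        have h4 : 0 < (1-v)*(1-v*w) := by apply mul_pos <;> linarith
        have h5 := mul_le_mul_of_nonneg_left h3 (hp j)
        rw [← h1] at h5
        exact le_of_mul_le_mul_right h5 h4
    exact key _ _ h le_rfl
  · induction a, h using Nat.le_induction with
    | base => exact le_rfl
    | succ j hj ih =>
      refine le_trans ?_ ih
      have hjx' : x ≤ (j:ℝ)+1 := by
        have h1 := Nat.lt_floor_add_one x
        have : ((⌊x⌋₊:ℕ):ℝ) ≤ j := by exact_mod_cast hj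
        linarith
      have huv : Real.exp (-t)^(j+1) ≤ u := by
        rw [hv, hu, Real.exp_le_exp]
        have := mul_le_mul_of_nonneg_left hjx' ht.le
        linarith
      have h1 := hs j
      have h2 := hvlt j
      have hv0 : 0 < Real.exp (-t)^(j+1) := by positivity
      set v := Real.exp (-t)^(j+1)
      have hvw : v*w ≤ u*w := by gcongr
      have h3 : (1-u)*(1-u*w) ≤ (1-v)*(1-v*w) := by
        apply mul_le_mul <;> linarith
      have h4 : 0 < (1-v)*(1-v*w) := by apply mul_pos <;> linarith
      have h5 := mul_le_mul_of_nonneg_left h3 (hp j)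
      rw [← h1] at h5
      exact le_of_mul_le_mul_right h5 h4

lemma bb_tail (t x : ℝ) (ht : 0 < t) (hx : 0 ≤ x) (l a n : ℕ) (hux : Real.exp (-(t*x)) * (1+Real.exp (-t)^l) = 1) :
    bb l a n ≤ Real.exp (t*n + kap/t + t - t*((a:ℝ)-x)^2) := by
  have hq : 0 < Real.exp (-t) := Real.exp_pos _
  have hq1 : Real.exp (-t) < 1 := by rw [Real.exp_lt_one_iff]; linarith
  have h1 := HH_max t x ht hx l a hux
  unfold HH at h1
  have h2 := TT_bd t ht l ⌊x⌋₊
  have h3 : t*(((⌊x⌋₊:ℕ):ℝ)-x)^2 ≤ t := by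
    have a1 := Nat.lt_floor_add_one x
    have a2 := Nat.floor_le hx
    have : (((⌊x⌋₊:ℕ):ℝ)-x)^2 ≤ 1 := by nlinarith
    nlinarith
  have h4 : TT (Real.exp (-t)) l a * Real.exp (t*((a:ℝ)-x)^2) ≤ Real.exp (kap/t) * Real.exp t := by
    apply h1.trans
    apply mul_le_mul h2 (Real.exp_le_exp.mpr h3) (by positivity) (by positivity)
  have h5 : bb l a n * Real.exp (-t)^n ≤ TT (Real.exp (-t)) l a :=
    le_hasSum (ev_TT _ hq hq1 l a) n (fun i _ => mul_nonneg (bb_nonneg ..) (by positivity))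
  have h6 : bb l a n * Real.exp (-t)^n * Real.exp (t*((a:ℝ)-x)^2) ≤ Real.exp (kap/t) * Real.exp t :=
    (mul_le_mul_of_nonneg_right h5 (by positivity)).trans h4
  have h7 : Real.exp (-t)^n = Real.exp (-(t*n)) := by
    rw [← Real.exp_nat_mul]; congr 1; ring
  rw [h7, ← Real.exp_add, mul_assoc, ← Real.exp_add] at h6
  have h8 := mul_le_mul_of_nonneg_right h6 (Real.exp_pos (t*n - t*((a:ℝ)-x)^2)).le
  rw [mul_assoc, ← Real.exp_add, ← Real.exp_add] at h8
  have e : -(t*n) + t*((a:ℝ)-x)^2 + (t*n - t*((a:ℝ)-x)^2) = 0 := by ring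
  rw [e, Real.exp_zero, mul_one] at h8
  apply h8.trans_eq
  congr 1; ring

lemma tail_final (N : ℕ) (hY : 1000 ≤ YY N) (hE : 10 * YY N^100 ≤ Real.exp (YY N)) (x : ℝ) (hx : 0 ≤ x) (l a n : ℕ) (hn : n ≤ N)
    (hux : Real.exp (-(gg / YY N^10*x)) * (1+Real.exp (-(gg / YY N^10))^l) = 1) (hd : YY N^8 ≤ |(a:ℝ) - x|) :
    bb l a n ≤ pp N * (1/YY N^80) := by
  have hYN := YY_pow N
  have hrt := YY_rt N
  have hp := pp_one_le N
  have hNb : 2560000 ≤ N := by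
    have : (1000:ℝ)^20 ≤ YY N^20 := by gcongr
    rw [hYN] at this
    have h2 : 1000^20 ≤ N := by exact_mod_cast this
    omega
  have hR2 := R2 N hNb
  rw [hrt] at hR2
  set Y := YY N with hYd
  have hg := gg_gt
  have hg2 := gg_lt
  have hY0 : 0 < Y := by linarith
  have ht : 0 < gg/Y^10 := by positivity
  apply (bb_tail (gg/Y^10) x ht hx l a n hux).trans
  have h1 : Real.exp (2*gg*Y^10 - 260*Y^5) ≤ pp N := by
    rw [← Real.exp_log (by linarith : 0 < pp N), Real.exp_le_exp]
    calc _ = 2*gg*(Y^5)^2 - 260*Y^5 := by ring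
      _ ≤ _ := hR2
  have h2 : Real.exp (-Y) ≤ 1/Y^80 := by
    rw [Real.exp_neg, inv_eq_one_div]
    apply one_div_le_one_div_of_le (by positivity)
    have : Y^80 ≤ Y^100 := pow_le_pow_right₀ (by linarith) (by norm_num)
    have : 0 < Y^80 := by positivity
    linarith
  have h3 : gg/Y^10 * n + kap/(gg/Y^10) + gg/Y^10 - gg/Y^10*((a:ℝ)-x)^2 ≤ (2*gg*Y^10 - 260*Y^5) + -Y := by
    have a1 : gg/Y^10*n ≤ gg*Y^10 := by
      have : (n:ℝ) ≤ Y^20 := by rw [hYN]; exact_mod_cast hn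
      calc gg/Y^10*n ≤ gg/Y^10*Y^20 := by gcongr
        _ = _ := by field_simp
    have a2 : kap/(gg/Y^10) = gg*Y^10 := by rw [← gg_sq]; field_simp
    have a3 : gg/Y^10 ≤ 1 := by
      rw [div_le_one (by positivity)]
      have : Y ≤ Y^10 := by
        calc Y = Y^1 := by ring
          _ ≤ Y^10 := pow_le_pow_right₀ (by linarith) (by norm_num)
      linarith
    have a4 : Y^16 ≤ ((a:ℝ)-x)^2 := by
      rw [← sq_abs]
      calc Y^16 = (Y^8)^2 := by ring
        _ ≤ _ := by gcongr
    have a5 : gg*Y^6 ≤ gg/Y^10*((a:ℝ)-x)^2 := by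
      calc gg*Y^6 = gg/Y^10*Y^16 := by field_simp
        _ ≤ _ := by gcongr
    have a6 : Y^5 * 1000 ≤ gg*Y^6 := by
      have : Y^6 = Y^5*Y := by ring
      have h5 : 0 < Y^5 := by positivity
      rw [this]
      have h6 : Y^5*1000 ≤ Y^5*Y := by gcongr
      have h7 : 1 * (Y^5*Y) ≤ gg*(Y^5*Y) := by gcongr; linarith
      linarith
    have a7 : Y ≤ Y^5 := by
      calc Y = Y^1 := by ring
          _ ≤ Y^5 := pow_le_pow_right₀ (by linarith) (by norm_num)
    linarith
  calc _ ≤ Real.exp ((2*gg*Y^10 - 260*Y^5) + -Y) := Real.exp_le_exp.mpr h3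
    _ = Real.exp (2*gg*Y^10 - 260*Y^5) * Real.exp (-Y) := Real.exp_add ..
    _ ≤ _ := by gcongr

open Real

lemma bt_nonneg (l a N k : ℕ) : 0 ≤ bt l a N k := by
  unfold bt; split_ifs
  · exact bb_nonneg ..
  · exact le_rfl

lemma bt_anti (l a N k k' : ℕ) (h : 1 ≤ a + l) (hk : k ≤ k') : bt l a N k' ≤ bt l a N k := by
  by_cases h1 : k' ≤ N
  · unfold bt; rw [if_pos h1, if_pos (by omega)]
    exact bb_mono h (by omega)
  · have : bt l a N k' = 0 := by unfold bt; rw [if_neg h1]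
    rw [this]; exact bt_nonneg ..

lemma bt_sum (l N k : ℕ) : ∑ a ∈ Finset.range (N+1), bt l a N k = pt N k := by
  unfold bt pt
  by_cases h : k ≤ N
  · simp only [h, if_true]; exact bb_sum l (N-k) N (by omega)
  · simp [h]

lemma bt_tail (l a N k : ℕ) (τ : ℝ) (hτ : 0 ≤ τ) (h : ∀ n, n ≤ N → bb l a n ≤ τ) : bt l a N k ≤ τ := by
  unfold bt; split_ifs
  · exact h _ (by omega)
  · exact hτ

lemma V_upper (l N α β : ℕ) (τ : ℝ) (hτ : 0 ≤ τ) (h : ∀ a n, n ≤ N → (a < α ∨ β < a) → bb l a n ≤ τ) (hα : 1 ≤ α + l) :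
    ∑ a ∈ Finset.range (N+1), ∑ c ∈ Finset.range (N+1), bt l a N (a + c*(2*a+l+1)) ≤ 
     ∑ c ∈ Finset.range (N+1), (pt N (α + c*(2*α+l+1)) + (N+1)*τ) := by
  rw [Finset.sum_comm]
  apply Finset.sum_le_sum
  intro c _
  rw [← bt_sum l]
  have e : ((N:ℝ)+1)*τ = ∑ a ∈ Finset.range (N+1), τ := by simp
  rw [e, ← Finset.sum_add_distrib]
  apply Finset.sum_le_sum
  intro a _
  by_cases ha : a < α ∨ β < a
  · have := bt_tail l a N (a + c*(2*a+l+1)) τ hτ (fun n hn => h a n hn ha)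
    linarith [bt_nonneg l a N (α + c*(2*α+l+1))]
  · push Not at ha
    have := bt_anti l a N (α + c*(2*α+l+1)) (a + c*(2*a+l+1)) (by omega) (by gcongr <;> omega)
    linarith

lemma V_lower (l N α β : ℕ) (τ : ℝ) (hτ : 0 ≤ τ) (h : ∀ a n, n ≤ N → (a < α ∨ β < a) → bb l a n ≤ τ) (hα : 1 ≤ α + l) :
     ∑ c ∈ Finset.range (N+1), (pt N (β + c*(2*β+l+1)) - (N+1)*τ) ≤
    ∑ a ∈ Finset.range (N+1), ∑ c ∈ Finset.range (N+1), bt l a N (a + c*(2*a+l+1)) := by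
  rw [Finset.sum_comm]
  apply Finset.sum_le_sum
  intro c _
  rw [← bt_sum l]
  have e : ((N:ℝ)+1)*τ = ∑ a ∈ Finset.range (N+1), τ := by simp
  rw [e, ← Finset.sum_sub_distrib]
  apply Finset.sum_le_sum
  intro a _
  by_cases ha : a < α ∨ β < a
  · have := bt_tail l a N (β + c*(2*β+l+1)) τ hτ (fun n hn => h a n hn ha)
    linarith [bt_nonneg l a N (a + c*(2*a+l+1))]
  · push Not at ha
    have := bt_anti l a N (a + c*(2*a+l+1)) (β + c*(2*β+l+1)) (by omega) (by gcongr <;> omega)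
    linarith

lemma num_up (u w h E : ℝ) (hu : 0 < u) (hw : 0 < w) (hA : u^2*w ≤ 1/4) (h0 : 0 ≤ h) (h1 : h ≤ 1/1000000)
    (hE : 1 ≤ E) (hE2 : E ≤ 1+2*h) : (u*E)^2*w < 1 ∧ 
    (1+600*h)*((u*E)/(1-(u*E)^2*w)) ≤ u/(1-u^2*w)*(1+700*h) := by
  have hA0 : 0 < u^2*w := by positivity
  have e : (u*E)^2*w = (u^2*w)*E^2 := by ring
  have hE3 : E^2 ≤ 1+5*h := by nlinarith
  rw [e]
  set A := u^2*w
  have hA1 : A*E^2 ≤ A + A * (5*h) := by nlinarith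
  have hA2 : (1-A)*(1-2*h) ≤ 1 - A*E^2 := by nlinarith
  have hp : 0 < (1-A)*(1-2*h) := by apply mul_pos <;> linarith
  refine ⟨by linarith, ?_⟩
  calc (1+600*h)*((u*E)/(1-A*E^2)) ≤ (1+600*h)*((u*(1+2*h))/((1-A)*(1-2*h))) := by gcongr
    _ = u/(1-A) * ((1+600*h)*(1+2*h)/(1-2*h)) := by field_simp
    _ ≤ _ := by
      have : 0 < 1 - A := by linarith
      gcongr
      rw [div_le_iff₀ (by linarith)]
      nlinarith

lemma num_low (u w h E z : ℝ) (hu : 0 < u) (hw : 0 < w) (hA : u^2*w ≤ 1/4) (h0 : 0 ≤ h) (h1 : h ≤ 1/1000000)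
    (hE : 1 ≤ E) (hE2 : E ≤ 1+2*h) (hz : z ≤ h) : (u/E)^2*w/E ≤ 1/4 ∧ 
    u/(1-u^2*w)*(1-700*h) ≤ (1-600*h)*((u/E)*((1-z)/(1-(u/E)^2*w/E))) := by
  have hA0 : 0 < u^2*w := by positivity
  have e : (u/E)^2*w/E = (u^2*w)*(1/E)^3 := by field_simp
  have hE0 : 0 < E := by linarith
  have hi1 : 1/E ≤ 1 := by rw [div_le_one hE0]; exact hE
  have hi2 : 1-2*h ≤ 1/E := by rw [le_div_iff₀ hE0]; nlinarith
  have hi0 : 0 < 1/E := by positivity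
  rw [e, show u/E = u*(1/E) by ring]
  set i := 1/E
  set A := u^2*w
  have hi3 : i^3 ≤ 1 := pow_le_one₀ hi0.le hi1
  have hi4 : 1-6*h ≤ i^3 := by
    calc 1-6*h ≤ (1-2*h)^3 := by nlinarith [mul_nonneg h0 h0]
      _ ≤ i^3 := by gcongr; linarith
  have hA1 : A*i^3 ≤ A := by nlinarith
  have hA2 : A - A*(6*h) ≤ A*i^3 := by nlinarith
  refine ⟨by linarith, ?_⟩
  have hA3 : 1 - A*i^3 ≤ (1-A)*(1+2*h) := by nlinarith
  have hp : 0 < 1-A*i^3 := by linarith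
  have hq : 0 < 1 - A := by linarith
  calc u/(1-A)*(1-700*h) ≤ u/(1-A) * ((1-600*h)*(1-2*h)*(1-h)/(1+2*h)) := by
        gcongr
        rw [le_div_iff₀ (by linarith)]
        have : 0 ≤ h^2 := sq_nonneg h
        nlinarith [mul_nonneg h0 this]
    _ = (1-600*h)*((u*(1-2*h))*((1-h)/((1-A)*(1+2*h)))) := by field_simp
    _ ≤ _ := by
        have : 0 ≤ 1 - 600*h := by linarith
        have : 0 ≤ 1 - h := by linarith
        gcongr
        linarith

lemma geom_up (B w : ℝ) (hB : 0 ≤ B) (hw : 0 ≤ w) (h : B^2*w < 1) (M : ℕ) : ∑ c ∈ Finset.range M, B*(B^2*w)^c ≤ B/(1-B^2*w) := by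
  rw [← Finset.mul_sum, div_eq_mul_inv]
  gcongr
  exact sum_le_hasSum _ (fun i _ => by positivity) (hasSum_geometric_of_lt_one (by positivity) h)

lemma exp_k (t : ℝ) (a c l : ℕ) : Real.exp (-(t*((a + c*(2*a+l+1) : ℕ):ℝ))) = 
    Real.exp (-(t*a)) * (Real.exp (-(t*a))^2 * Real.exp (-t)^l * Real.exp (-t))^c := by
  rw [← Real.exp_nat_mul, ← Real.exp_nat_mul, ← Real.exp_add, ← Real.exp_add, ← Real.exp_nat_mul, ← Real.exp_add]
  congr 1; push_cast; ring

open Real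

lemma one_sub_low (N : ℕ) (y : ℝ) (h0 : 0 ≤ y) (h : y ≤ 1/4) (hY : 1000 ≤ YY N) : y^(N+1) ≤ 1/YY N^2 := by
  have hYN := YY_pow N
  have h1 : y^(N+1) ≤ (1/4)^(N+1) := by gcongr
  have h2 : ((N+1:ℕ):ℝ) ≤ (2:ℝ)^(N+1) := by exact_mod_cast (Nat.lt_two_pow_self).le
  have h3 : (2:ℝ)^(N+1) ≤ 4^(N+1) := by gcongr; norm_num
  have h4 : YY N^2 ≤ YY N^20 := pow_le_pow_right₀ (by linarith) (by norm_num)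
  rw [one_div_pow] at h1
  apply h1.trans
  apply one_div_le_one_div_of_le (by positivity)
  push_cast at h2
  linarith

lemma exp_facts (N : ℕ) (hY : 1000 ≤ YY N) : 1 ≤ Real.exp (gg/YY N^10*YY N^8) ∧ Real.exp (gg/YY N^10*YY N^8) ≤ 1 + 2*(1/YY N^2) ∧
    (Real.exp (gg/YY N^10*YY N^8))⁻¹ ≤ Real.exp (-(gg/YY N^10)) ∧ 1/YY N^2 ≤ 1/1000000 := by
  set Y := YY N
  have hY0 : 0 < Y := by linarith
  have hg := gg_gt
  have hg2 := gg_lt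
  have h1 : 1/Y^2 ≤ 1/1000000 := by
    apply one_div_le_one_div_of_le (by norm_num); nlinarith
  have e : gg/Y^10*Y^8 = gg*(1/Y^2) := by field_simp
  have hi : 0 < 1/Y^2 := by positivity
  refine ⟨Real.one_le_exp (by positivity), ?_, ?_, h1⟩
  · rw [e]
    set h := 1/Y^2
    have a1 : gg*h ≤ 1.31*h := by gcongr
    have a2 := Real.abs_exp_sub_one_sub_id_le (x := gg*h) (by rw [abs_of_pos (by positivity)]; linarith)
    have a3 := (abs_le.mp a2).2
    have a4 : (gg*h)^2 ≤ (1.31*h)^2 := by gcongr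
    nlinarith
  · rw [← Real.exp_neg, Real.exp_le_exp, neg_le_neg_iff]
    have : 1 ≤ Y^8 := one_le_pow₀ (by linarith)
    have h2 : 0 < gg/Y^10 := by positivity
    nlinarith

set_option maxHeartbeats 1000000 in
lemma final (N l : ℕ) (hY : 1000 ≤ YY N) (hE : 10 * YY N^100 ≤ Real.exp (YY N)) (w : ℝ) (hw : w = Real.exp (-(gg/YY N^10))^l) :
    |∑ a ∈ Finset.range (N+1), ∑ c ∈ Finset.range (N+1), bt l a N (a + c*(2*a+l+1)) - pp N * ((1+w)/(1+w+w^2))| ≤ 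
      1000*(1/YY N^2) * pp N * ((1+w)/(1+w+w^2)) := by
  obtain ⟨E1, E2, E3, h6⟩ := exp_facts N hY
  have hpt := fun k => pt_bd N k hY hE
  have htail := fun x hx l a n hn => tail_final N hY hE x hx l a n hn
  have hlow := fun y h0 h => one_sub_low N y h0 h hY
  have hYN := YY_pow N
  have hp := pp_one_le N
  set Y := YY N with hYd
  have hY0 : 0 < Y := by linarith
  have hg := gg_gt
  have hg2 := gg_lt
  set t := gg/Y^10 with ht
  have ht0 : 0 < t := by positivity
  have hq1 : Real.exp (-t) ≤ 1 := by rw [Real.exp_le_one_iff]; linarith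
  have hw0 : 0 < w := by rw [hw]; positivity
  have hw1 : w ≤ 1 := by rw [hw]; exact pow_le_one₀ (Real.exp_pos _).le hq1
  set x := Real.log (1+w)/t with hx
  have hx0 : 0 ≤ x := div_nonneg (Real.log_nonneg (by linarith)) ht0.le
  have hux : Real.exp (-(t*x)) * (1+w) = 1 := by
    rw [hx, mul_div_cancel₀ _ ht0.ne', Real.exp_neg, Real.exp_log (by linarith)]
    field_simp
  set u := Real.exp (-(t*x)) with hu
  have hu0 : 0 < u := Real.exp_pos _
  have hu1 : 1/2 ≤ u := by nlinarith
  have hA : u^2*w ≤ 1/4 := by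
    have : u * w = 1 - u := by linarith
    have : u^2*w = u*(1-u) := by rw [← this]; ring
    nlinarith [sq_nonneg (u-1/2)]
  have hF : (1+w)/(1+w+w^2) = u/(1-u^2*w) := by
    rw [div_eq_div_iff (by positivity) (by linarith)]
    have : u = 1/(1+w) := by field_simp; linarith
    rw [this]; field_simp; ring
  rw [hF]
  set d := Y^8 with hd
  set α := ⌈x-d⌉₊ with hα
  set β := ⌊x+d⌋₊ with hβ
  have hα1 : x - d ≤ α := Nat.le_ceil _
  have hβ1 : (β:ℝ) ≤ x+d := Nat.floor_le (by positivity)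
  have hαl : 1 ≤ α + l := by
    rcases Nat.eq_zero_or_pos l with hl | hl
    · have : 0 < α := by
        rw [hα, Nat.ceil_pos]
        have hw2 : w = 1 := by rw [hw, hl]; simp
        have : 0.5 ≤ Real.log (1+w) := by
          rw [hw2]; norm_num; have := Real.log_two_gt_d9; norm_num at *; linarith
        have h3 : d < x := by
          rw [hx, lt_div_iff₀ ht0]
          have : d * t = gg*(1/Y^2) := by rw [hd, ht]; field_simp
          rw [this]
          have : gg*(1/Y^2) ≤ 1.31*(1/1000000) := by gcongr
          norm_num at *; linarith
        linarith
      omega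
    · omega
  have htl : ∀ a n, n ≤ N → (a < α ∨ β < a) → bb l a n ≤ pp N * (1/Y^80) := by
    intro a n hn h
    apply htail x hx0 l a n hn (by rw [← hw]; exact hux)
    rcases h with h | h
    · have := Nat.lt_ceil.mp h
      rw [abs_sub_comm]
      exact le_trans (by linarith) (le_abs_self _)
    · have := (Nat.floor_lt (by positivity)).mp h
      exact le_trans (by linarith) (le_abs_self _)
  have hup := V_upper l N α β _ (by positivity) htl hαl
  have hlo := V_lower l N α β _ (by positivity) htl hαl
  set V := ∑ a ∈ Finset.range (N+1), ∑ c ∈ Finset.range (N+1), bt l a N (a + c*(2*a+l+1)) with hV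
  set E := Real.exp (t*d) with hEd
  set h := 1/Y^2 with hh
  have hh0 : 0 < h := by positivity
  have e600 : 600/Y^2 = 600*h := by rw [hh]; ring
  rw [e600] at hpt
  have hN2 : (N:ℝ)+1 ≤ 2*Y^20 := by
    rw [hYN]
    have : (1:ℝ) ≤ N := by rw [← hYN]; exact one_le_pow₀ (by linarith)
    linarith
  have herr : ((N:ℝ)+1)*(1/Y^60) + ((N:ℝ)+1)*(((N:ℝ)+1)*(1/Y^80)) ≤ h := by
    calc _ ≤ (2*Y^20)*(1/Y^60) + (2*Y^20)*((2*Y^20)*(1/Y^80)) := by gcongr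
      _ = 6*(1/Y^38)*(1/Y^2) := by field_simp; norm_num
      _ ≤ 1 * (1/Y^2) := by
        gcongr
        rw [← div_eq_mul_one_div, div_le_one (by positivity)]
        calc (6:ℝ) ≤ Y^1 := by linarith
          _ ≤ Y^38 := pow_le_pow_right₀ (by linarith) (by norm_num)
      _ = h := by rw [one_mul]
  have hF0 : 1/2 ≤ u/(1-u^2*w) := by
    rw [le_div_iff₀ (by linarith)]
    have : 0 < u^2*w := by positivity
    linarith
  have hα2 : Real.exp (-(t*α)) ≤ u*E := by
    rw [hu, hEd, ← Real.exp_add, Real.exp_le_exp]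
    have := mul_le_mul_of_nonneg_left hα1 ht0.le
    linarith
  have hβ2 : u/E ≤ Real.exp (-(t*β)) := by
    rw [hu, hEd, ← Real.exp_sub, Real.exp_le_exp]
    have := mul_le_mul_of_nonneg_left hβ1 ht0.le
    linarith
  have hE0 : 0 < E := by linarith
  obtain ⟨n1, n2⟩ := num_up u w h E hu0 hw0 hA hh0.le h6 E1 E2
  -- upper
  have up : V ≤ pp N * (u/(1-u^2*w)*(1+700*h)) + pp N * h := by
    have s1 : ∑ c ∈ Finset.range (N+1), (pt N (α + c*(2*α+l+1)) + (N+1)*(pp N * (1/Y^80))) ≤ 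
       ∑ c ∈ Finset.range (N+1), (pp N * ((1+600*h) * (u*E*((u*E)^2*w)^c)) + (pp N * (1/Y^60) + (N+1)*(pp N * (1/Y^80)))) := by
      apply Finset.sum_le_sum
      intro c _
      have h1 := (abs_le.mp (hpt (α + c*(2*α+l+1)))).2
      have h2 : Real.exp (-(t*((α + c*(2*α+l+1) : ℕ):ℝ))) ≤ u*E*((u*E)^2*w)^c := by
        rw [exp_k, ← hw]
        have hb : Real.exp (-(t*α))^2*w*Real.exp (-t) ≤ (u*E)^2*w := by
          calc Real.exp (-(t*α))^2*w*Real.exp (-t) ≤ (u*E)^2*w*1 := by gcongr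
            _ = _ := by ring
        exact mul_le_mul hα2 (pow_le_pow_left₀ (by positivity) hb c) (by positivity) (by positivity)
      have h3 : pp N * ((1+600*h) * Real.exp (-(t*((α + c*(2*α+l+1) : ℕ):ℝ)))) ≤ pp N * ((1+600*h) * (u*E*((u*E)^2*w)^c)) := by gcongr
      linarith
    have s2 := geom_up (u*E) w (by positivity) hw0.le n1 (N+1)
    have s1' : ∑ c ∈ Finset.range (N+1), (pp N * ((1+600*h) * (u*E*((u*E)^2*w)^c)) + (pp N * (1/Y^60) + (N+1)*(pp N * (1/Y^80)))) = pp N * ((1+600*h) * ∑ c ∈ Finset.range (N+1), u*E*((u*E)^2*w)^c) + ((N:ℝ)+1) * (pp N * (1/Y^60) + (N+1)*(pp N * (1/Y^80))) := by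
      rw [Finset.sum_add_distrib, ← Finset.mul_sum, ← Finset.mul_sum, Finset.sum_const, Finset.card_range, nsmul_eq_mul]
      push_cast
      rfl
    refine hup.trans (s1.trans (s1'.trans_le ?_))
    have s3 : pp N * ((1+600*h) * ∑ c ∈ Finset.range (N+1), u*E*((u*E)^2*w)^c) ≤ pp N * (u/(1-u^2*w)*(1+700*h)) := by
      refine mul_le_mul_of_nonneg_left (le_trans ?_ n2) (by linarith)
      exact mul_le_mul_of_nonneg_left s2 (by positivity)
    have s4 := mul_le_mul_of_nonneg_left herr (by linarith : 0 ≤ pp N)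
    linarith
  have low : pp N * (u/(1-u^2*w)*(1-700*h)) - pp N * h ≤ V := by
    set y := (u/E)^2*w/E with hy
    have hy0 : 0 ≤ y := by positivity
    have hy4 : y ≤ 1/4 := (num_low u w h E 0 hu0 hw0 hA hh0.le h6 E1 E2 hh0.le).1
    obtain ⟨-, m2⟩ := num_low u w h E (y^(N+1)) hu0 hw0 hA hh0.le h6 E1 E2 (hlow y hy0 hy4)
    rw [← hy] at m2
    have s1 : ∑ c ∈ Finset.range (N+1), (pp N * ((1-600*h) * (u/E*y^c)) - (pp N * (1/Y^60) + (N+1)*(pp N * (1/Y^80)))) ≤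
       ∑ c ∈ Finset.range (N+1), (pt N (β + c*(2*β+l+1)) - (N+1)*(pp N * (1/Y^80))) := by
      apply Finset.sum_le_sum
      intro c _
      have h1 := (abs_le.mp (hpt (β + c*(2*β+l+1)))).1
      have h2 : u/E*y^c ≤ Real.exp (-(t*((β + c*(2*β+l+1) : ℕ):ℝ))) := by
        rw [exp_k, ← hw]
        gcongr
        rw [hy, div_eq_mul_inv]
        gcongr
      have h600 : 0 ≤ 1-600*h := by linarith
      have h3 : pp N * ((1-600*h) * (u/E*y^c)) ≤ pp N * ((1-600*h) * Real.exp (-(t*((β + c*(2*β+l+1) : ℕ):ℝ)))) := by gcongr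
      linarith
    have s2 : ∑ c ∈ Finset.range (N+1), u/E*y^c = u/E*((1-y^(N+1))/(1-y)) := by
      rw [← Finset.mul_sum, geom_sum_eq (by linarith)]
      congr 1
      rw [div_eq_div_iff (by linarith) (by linarith)]; ring
    have s1' : ∑ c ∈ Finset.range (N+1), (pp N * ((1-600*h) * (u/E*y^c)) - (pp N * (1/Y^60) + (N+1)*(pp N * (1/Y^80)))) = pp N * ((1-600*h) * (u/E*((1-y^(N+1))/(1-y)))) - ((N:ℝ)+1) * (pp N * (1/Y^60) + (N+1)*(pp N * (1/Y^80))) := by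
      rw [Finset.sum_sub_distrib, ← Finset.mul_sum, ← Finset.mul_sum, Finset.sum_const, Finset.card_range, nsmul_eq_mul, s2]
      push_cast
      rfl
    refine le_trans (le_trans ?_ s1'.ge) (s1.trans hlo)
    have s3 := mul_le_mul_of_nonneg_left m2 (by linarith : 0 ≤ pp N)
    have s4 := mul_le_mul_of_nonneg_left herr (by linarith : 0 ≤ pp N)
    linarith
  set F := u/(1-u^2*w) with hFd
  have hfin : pp N * h ≤ 2 * (h * pp N * F) := by
    have : 0 ≤ pp N * h := by positivity
    have h5 := mul_le_mul_of_nonneg_left hF0 this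
    linarith only [h5]
  have hpos : 0 ≤ h * pp N * F := by positivity
  rw [abs_le]
  constructor
  · linarith only [low, hfin, hpos]
  · linarith only [up, hfin, hpos]

lemma exists_Y : ∃ Y0 : ℝ, ∀ Y, Y0 ≤ Y → 1000 ≤ Y ∧ 10*Y^100 ≤ Real.exp Y := by
  have h := (Real.tendsto_exp_div_pow_atTop 100).eventually_ge_atTop 10
  have h2 := h.and (Filter.eventually_ge_atTop (1000:ℝ))
  obtain ⟨Y0, hY0⟩ := Filter.eventually_atTop.mp h2
  refine ⟨Y0, fun Y hY => ?_⟩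
  obtain ⟨a, b⟩ := hY0 Y hY
  refine ⟨b, ?_⟩
  rwa [le_div_iff₀ (by positivity)] at a

theorem stmt_4 :
    ∃ C > (0 : ℝ), ∃ N₀ : ℕ, ∀ N : ℕ, N₀ ≤ N → ∀ ℓ : ℤ,
      |(Vd ℓ (N + ℓ.natAbs * (ℓ.natAbs + 1) / 2) : ℝ) -
          (partitionCount (N : ℤ) : ℝ) * Frk (π * |(ℓ : ℝ)| / Real.sqrt (6 * N))| ≤
        C * (N : ℝ) ^ (-(1 / 10) : ℝ) * (partitionCount (N : ℤ) : ℝ) *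
          Frk (π * |(ℓ : ℝ)| / Real.sqrt (6 * N)) := by
  obtain ⟨Y0, hY0⟩ := exists_Y
  have ht : Filter.Tendsto YY Filter.atTop Filter.atTop :=
    (tendsto_rpow_atTop (by norm_num : (0:ℝ) < 1/20)).comp tendsto_natCast_atTop_atTop
  obtain ⟨N0, hN0⟩ := Filter.eventually_atTop.mp (ht.eventually_ge_atTop Y0)
  refine ⟨1000, by norm_num, N0, ?_⟩
  intro N hN ℓ
  obtain ⟨hY, hE⟩ := hY0 _ (hN0 N hN)
  have hf := final N ℓ.natAbs hY hE _ rfl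
  have e1 : (partitionCount (N:ℤ) : ℝ) = pp N := by
    simp [partitionCount, pp]
  have e2 : (N:ℝ)^(-(1/10):ℝ) = 1/YY N^2 := by
    unfold YY
    rw [← Real.rpow_natCast, ← Real.rpow_mul (by positivity), show (1/20:ℝ)*((2:ℕ):ℝ) = 1/10 by norm_num, Real.rpow_neg (by positivity) (1/10), inv_eq_one_div]
  have e3 : π * |(ℓ:ℝ)| / Real.sqrt (6*N) = gg/YY N^10 * ℓ.natAbs := by
    have a1 : Real.sqrt (6*N) = Real.sqrt 6 * YY N^10 := by
      rw [Real.sqrt_mul (by norm_num), ← YY_pow N, show YY N^20 = (YY N^10)^2 by ring, Real.sqrt_sq (pow_nonneg (YY_nonneg N) _)]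
    have a2 : gg = π / Real.sqrt 6 := by
      unfold gg kap
      rw [Real.sqrt_div (by positivity), Real.sqrt_sq Real.pi_pos.le]
    have a3 : ((ℓ.natAbs : ℕ) : ℝ) = |(ℓ:ℝ)| := by
      rw [Nat.cast_natAbs]; push_cast; rfl
    rw [a1, a2, a3]
    field_simp
  have e4 : Frk (gg/YY N^10 * ℓ.natAbs) = (1+Real.exp (-(gg/YY N^10))^ℓ.natAbs)/(1+Real.exp (-(gg/YY N^10))^ℓ.natAbs + (Real.exp (-(gg/YY N^10))^ℓ.natAbs)^2) := by
    unfold Frk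
    have b1 : Real.exp (-(gg/YY N^10 * ℓ.natAbs)) = Real.exp (-(gg/YY N^10))^ℓ.natAbs := by
      rw [← Real.exp_nat_mul]; congr 1; ring
    have b2 : Real.exp (-2*(gg/YY N^10 * ℓ.natAbs)) = (Real.exp (-(gg/YY N^10))^ℓ.natAbs)^2 := by
      rw [← b1, ← Real.exp_nat_mul]; congr 1; push_cast; ring
    rw [b1, b2]
  rw [e1, e2, e3, e4, Vd_eq]
  exact hf
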